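/- Let f be a non-wandering homeomorphism of the open annulus 𝔸 = 𝕋¹ × ℝ homotopic to the identity with no periodic points, and let C₁ and C₂ be f-invariant circloids. Then either C₁ = C₂ or C₁ ∩ C₂ = ∅. -/

import Mathlib

open Filter Topology

local notation "⟪" x ", " y "⟫" => @inner ℝ _ _ x y

noncomputable section

/-- The open annulus `𝔸 = 𝕋¹ × ℝ`. -/
abbrev Ann := AddCircle (1 : ℝ) × ℝ

/-- `S ⊆ 𝔸` is unbounded from above in the `ℝ`-coordinate. -/
def UnbAbove (S : Set Ann) : Prop := ¬ BddAbove (Prod.snd '' S)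

/-- `S ⊆ 𝔸` is unbounded from below in the `ℝ`-coordinate. -/
def UnbBelow (S : Set Ann) : Prop := ¬ BddBelow (Prod.snd '' S)

/-- `S ⊆ 𝔸` is bounded (equivalently, bounded in the `ℝ`-coordinate). -/
def BoundedA (S : Set Ann) : Prop := BddAbove (Prod.snd '' S) ∧ BddBelow (Prod.snd '' S)

/-- `E ⊆ 𝔸` is essential: no connected component of its complement is unbounded both
above and below. -/
def EssentialA (E : Set Ann) : Prop :=
  ∀ x ∈ Eᶜ, ¬ (UnbAbove (connectedComponentIn Eᶜ x) ∧ UnbBelow (connectedComponentIn Eᶜ x))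

/-- An annular continuum: a compact connected set whose complement has exactly two
connected components, both unbounded. -/
def IsAnnularContinuum (E : Set Ann) : Prop :=
  IsCompact E ∧ IsConnected E ∧
  (∀ x ∈ Eᶜ, ¬ BoundedA (connectedComponentIn Eᶜ x)) ∧
  ∃ x y, x ∈ Eᶜ ∧ y ∈ Eᶜ ∧ connectedComponentIn Eᶜ x ≠ connectedComponentIn Eᶜ y ∧
    ∀ z ∈ Eᶜ, connectedComponentIn Eᶜ z = connectedComponentIn Eᶜ x ∨
      connectedComponentIn Eᶜ z = connectedComponentIn Eᶜ y

/-- A circloid: an annular continuum containing no strictly smaller annular continuum. -/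
def IsCircloidA (C : Set Ann) : Prop :=
  IsAnnularContinuum C ∧ ∀ E ⊆ C, IsAnnularContinuum E → E = C

/-- `ℒ(U)`: the connected component of `𝔸 \ cl(U)` unbounded from below (for a
generating set it is unique; in general we take the union of all components of
`𝔸 \ cl(U)` unbounded from below). -/
def lowerComp (U : Set Ann) : Set Ann :=
  {z | z ∈ (closure U)ᶜ ∧ UnbBelow (connectedComponentIn (closure U)ᶜ z)}

/-- `𝒰(L)`: the connected component of `𝔸 \ cl(L)` unbounded from above. -/
def upperComp (L : Set Ann) : Set Ann :=
  {z | z ∈ (closure L)ᶜ ∧ UnbAbove (connectedComponentIn (closure L)ᶜ z)}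

/-- An upper generating set: bounded from below with essential closure. -/
def UpperGen (U : Set Ann) : Prop := BddBelow (Prod.snd '' U) ∧ EssentialA (closure U)

/-- A lower generating set: bounded from above with essential closure. -/
def LowerGen (L : Set Ann) : Prop := BddAbove (Prod.snd '' L) ∧ EssentialA (closure L)

/-- `𝒞⁻(U) = 𝔸 \ (𝒰ℒ(U) ∪ ℒ𝒰ℒ(U))`. -/
def Cminus (U : Set Ann) : Set Ann :=
  (upperComp (lowerComp U) ∪ lowerComp (upperComp (lowerComp U)))ᶜ

/-- `𝒞⁺(L) = 𝔸 \ (ℒ𝒰(L) ∪ 𝒰ℒ𝒰(L))`. -/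
def Cplus (L : Set Ann) : Set Ann :=
  (lowerComp (upperComp L) ∪ upperComp (lowerComp (upperComp L)))ᶜ

/-- `f` is non-wandering: no nonempty open set `U` satisfies `fⁿ(U) ∩ U = ∅` for all
`n ≥ 1`. -/
def NonWandering {X : Type*} [TopologicalSpace X] (f : X → X) : Prop :=
  ∀ U : Set X, IsOpen U → U.Nonempty → ∃ n : ℕ, 1 ≤ n ∧ (f^[n] '' U ∩ U).Nonempty

/-- `f` has a periodic point. -/
def HasPeriodicPoint {X : Type*} (f : X → X) : Prop :=
  ∃ (x : X) (q : ℕ), 1 ≤ q ∧ f^[q] x = x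

/-- The covering map `p : ℝ² → 𝔸`. -/
def projA (z : ℝ × ℝ) : Ann := ((z.1 : AddCircle (1 : ℝ)), z.2)

/-- `G` is a lift of `f : 𝔸 → 𝔸`:  `p ∘ G = f ∘ p` and `G (z + (1,0)) = G z + (1,0)`.
The existence of such a lift expresses that `f` is homotopic to the identity. -/
def IsLiftA (f : Ann ≃ₜ Ann) (G : (ℝ × ℝ) ≃ₜ (ℝ × ℝ)) : Prop :=
  (∀ z : ℝ × ℝ, projA (G z) = f (projA z)) ∧
  ∀ z : ℝ × ℝ, G (z + (1, 0)) = G z + (1, 0)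

/-- A simple closed curve in `𝔸`: a subset homeomorphic to the circle. -/
def IsSimpleClosedCurveA (Γ : Set Ann) : Prop :=
  ∃ e : AddCircle (1 : ℝ) → Ann, IsEmbedding e ∧ Γ = Set.range e

/-!
Let `Pᵢ` and `Qᵢ` be the upper and lower components of the complement of `Cᵢ`, and suppose that
`C₁` and `C₂` meet. Then the complement of `P₁ ∩ Q₂` is connected and reaches both ends of the
annulus, so a component `D` of the preimage of `P₁ ∩ Q₂` in the universal cover is disjoint from
its nontrivial integer translates: a path in `D` from `d` to `d + k` projects to a loop of winding
number `k` that misses a path joining the two ends. Were `D` nonempty, the non-wandering property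
would give a power of `f` with a lift `H` preserving `D`, and then an orbit of `H²` returning to
a small free disc in `D`. Now `H²` preserves orientation and has no fixed point, and such a
(Brouwer) homeomorphism of the plane has no recurrence in a free disc. Hence `P₁ ∩ Q₂` is empty,
and so is `P₂ ∩ Q₁`; by minimality of circloids and unicoherence of the annulus, `P₁ = P₂` and
`Q₁ = Q₂`.

Orientation, degree and unicoherence are all expressed by continuous complex logarithms. No free
disc `N` is recurrent: moving a point inside `N` turns a recurrence into a periodic orbit of another
Brouwer homeomorphism, and such an orbit can be shortened until a point of period two appears,
which `OrientationPreserving.apply_apply_ne` excludes.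
-/

open Complex (exp log I)
open scoped Real

/-! ### Continuous logarithms -/

theorem sub_eq_sub_of_exp_eq_exp {X : Type*} [TopologicalSpace X] [PreconnectedSpace X]
    {φ ψ : X → ℂ} (hφ : Continuous φ) (hψ : Continuous ψ) (h : ∀ x, exp (φ x) = exp (ψ x))
    (x y : X) : φ x - φ y = ψ x - ψ y := by
  have hx : φ x - ψ x = φ y - ψ y := congrFun
    (Complex.isCoveringMap_exp.eq_of_comp_eq (g₁ := fun z ↦ φ z - ψ z)
      (g₂ := fun _ ↦ φ y - ψ y) (hφ.sub hψ) continuous_const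
      (by funext z; simp [Complex.exp_sub, h]) y rfl) x
  linear_combination hx

theorem exists_continuous_log {X : Type*} [TopologicalSpace X] [LocallyPathConnectedSpace X]
    [SimplyConnectedSpace X] {g : X → ℂ} (hg : Continuous g) (hg₀ : ∀ x, g x ≠ 0) :
    ∃ φ : X → ℂ, Continuous φ ∧ ∀ x, exp (φ x) = g x := by
  obtain ⟨x₀⟩ : Nonempty X := inferInstance
  obtain ⟨φ, ⟨-, hφ⟩, -⟩ := Complex.isCoveringMapOn_exp.existsUnique_continuousMap_lifts
    (⟨g, hg⟩ : C(X, ℂ)) (a₀ := x₀) (Complex.exp_log (hg₀ x₀)) (fun x ↦ by simpa using hg₀ x)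
  exact ⟨φ, φ.continuous, congrFun hφ⟩

/-! ### Orientation-preserving homeomorphisms of the plane -/

/-- `A` is a continuous logarithm of the slope `(h u - h v) / (u - v)` off the diagonal. -/
structure IsLogSlope (h : ℂ → ℂ) (A : ℂ × ℂ → ℂ) : Prop where
  continuousOn : ContinuousOn A {p | p.1 ≠ p.2}
  sub_eq : ∀ {u v}, u ≠ v → h u - h v = exp (A (u, v)) * (u - v)

/-- A homeomorphism of the plane is orientation preserving if its slope has a continuous logarithm
off the diagonal: turning one point once around another turns the images exactly once, in the same
direction. -/
def OrientationPreserving (h : ℂ ≃ₜ ℂ) : Prop := ∃ A, IsLogSlope h A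

namespace OrientationPreserving

theorem trans {h g : ℂ ≃ₜ ℂ} (hh : OrientationPreserving h) (hg : OrientationPreserving g) :
    OrientationPreserving (h.trans g) := by
  obtain ⟨A, hA⟩ := hh
  obtain ⟨B, hB⟩ := hg
  refine ⟨fun p ↦ B (h p.1, h p.2) + A p, ?_, fun {u v} huv ↦ ?_⟩
  · exact (hB.continuousOn.comp (by fun_prop) fun p hp ↦ h.injective.ne hp).add hA.continuousOn
  · rw [Homeomorph.trans_apply, Homeomorph.trans_apply, hB.sub_eq (h.injective.ne huv),
      hA.sub_eq huv, Complex.exp_add, mul_assoc]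

theorem symm {h : ℂ ≃ₜ ℂ} (hh : OrientationPreserving h) : OrientationPreserving h.symm := by
  obtain ⟨A, hA⟩ := hh
  refine ⟨fun p ↦ -A (h.symm p.1, h.symm p.2), ?_, fun {u v} huv ↦ ?_⟩
  · exact (hA.continuousOn.comp (by fun_prop) fun p hp ↦ h.symm.injective.ne hp).neg
  · have hslope := hA.sub_eq (h.symm.injective.ne huv)
    rw [h.apply_symm_apply, h.apply_symm_apply] at hslope
    rw [hslope, ← mul_assoc, ← Complex.exp_add, neg_add_cancel, Complex.exp_zero, one_mul]

end OrientationPreserving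

-- The difference of the two sides is a constant `c`, and exchanging `u` and `v` gives `c = -c`.
theorem IsLogSlope.apply_swap {h : ℂ → ℂ} {A : ℂ × ℂ → ℂ} (hA : IsLogSlope h A) {u v : ℂ}
    (huv : u ≠ v) : A (u, v) = A (v, u) := by
  have hne (p : ℂ × ℂ) : p.1 + exp p.2 ≠ p.1 := by simp
  have hexp (p : ℂ × ℂ) : exp (A (p.1 + exp p.2, p.1)) = exp (A (p.1, p.1 + exp p.2)) := by
    refine mul_right_cancel₀ (sub_ne_zero.2 (hne p)) ?_
    linear_combination -hA.sub_eq (hne p).symm - hA.sub_eq (hne p)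
  have hconst := sub_eq_sub_of_exp_eq_exp
    (hA.continuousOn.comp_continuous (by fun_prop) hne)
    (hA.continuousOn.comp_continuous (by fun_prop) fun p ↦ (hne p).symm) hexp
    (v, log (u - v)) (u, log (u - v) + π * I)
  have hπ : exp (log (u - v) + π * I) = v - u := by
    rw [Complex.exp_add, Complex.exp_pi_mul_I, Complex.exp_log (sub_ne_zero.2 huv)]
    ring
  simp only [Function.comp_apply, hπ, Complex.exp_log (sub_ne_zero.2 huv),
    add_sub_cancel] at hconst
  linear_combination hconst / 2

-- Compare a logarithm `L` of `h z - z` at `z` and at `h z`: along a cycle `x, h x` of length two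
-- the total change `2 (L (h x) - L x)` vanishes, although `h x - x` changes its sign.
theorem OrientationPreserving.apply_apply_ne {h : ℂ ≃ₜ ℂ} (hh : OrientationPreserving h)
    (hfix : ∀ z, h z ≠ z) (x : ℂ) : h (h x) ≠ x := by
  intro hx
  obtain ⟨A, hA⟩ := hh
  obtain ⟨L, hL, hexpL⟩ := exists_continuous_log (g := fun z ↦ h z - z) (by fun_prop)
    fun z ↦ sub_ne_zero.2 (hfix z)
  have hexp (z : ℂ) : exp (L (h z)) = exp (A (h z, z) + L z) := by
    rw [Complex.exp_add, hexpL, hexpL, hA.sub_eq (hfix z)]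
  have hA' : Continuous fun z ↦ A (h z, z) := hA.continuousOn.comp_continuous (by fun_prop) hfix
  have hchange := sub_eq_sub_of_exp_eq_exp (hL.comp h.continuous) (hA'.add hL) hexp (h x) x
  simp only [Function.comp_apply, Pi.add_apply, hx, hA.apply_swap (hfix x)] at hchange
  have hLx : L (h x) = L x := by linear_combination -hchange / 2
  have hsign : x - h x = h x - x := by rw [← hexpL x, ← hLx, hexpL (h x), hx]
  exact hfix x (by linear_combination -hsign / 2)

/-! ### Pushing points inside a connected open set -/

theorem exists_homeomorph_eq_add {E : Type*} [NormedAddCommGroup E] [NormedSpace ℝ E]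
    [CompleteSpace E] {e : E → E} {k : NNReal} (he : LipschitzWith k e) (hk : k < 1) :
    ∃ φ : E ≃ₜ E, ∀ z, φ z = z + e z := by
  have happrox : ApproximatesLinearOn (fun z ↦ z + e z)
      ((ContinuousLinearEquiv.refl ℝ E : E ≃L[ℝ] E) : E →L[ℝ] E) Set.univ k := by
    intro u _ v _
    simpa [add_sub_add_comm] using he.norm_sub_le u v
  have hk' : Subsingleton E ∨ k < ‖((ContinuousLinearEquiv.refl ℝ E).symm : E →L[ℝ] E)‖₊⁻¹ := by
    rcases subsingleton_or_nontrivial E with hE | hE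
    · exact .inl hE
    have hnorm : ‖((ContinuousLinearEquiv.refl ℝ E).symm : E →L[ℝ] E)‖₊ = 1 :=
      NNReal.eq ContinuousLinearMap.norm_id
    exact .inr (by rwa [hnorm, inv_one])
  exact ⟨happrox.toHomeomorph _ hk', fun _ ↦ rfl⟩

theorem OrientationPreserving.of_eq_add {φ : ℂ ≃ₜ ℂ} {e : ℂ → ℂ} {k : NNReal}
    (he : LipschitzWith k e) (hk : k < 1) (hφ : ∀ z, φ z = z + e z) :
    OrientationPreserving φ := by
  have hslit {u v : ℂ} (huv : u ≠ v) : (φ u - φ v) / (u - v) ∈ Complex.slitPlane := by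
    have huv' : u - v ≠ 0 := sub_ne_zero.2 huv
    have hslope : (φ u - φ v) / (u - v) = 1 + (e u - e v) / (u - v) := by
      rw [hφ, hφ]
      field_simp
      ring
    rw [hslope]
    apply Complex.mem_slitPlane_of_norm_lt_one
    rw [norm_div, div_lt_one (norm_pos_iff.2 huv')]
    calc ‖e u - e v‖ ≤ k * ‖u - v‖ := he.norm_sub_le u v
      _ < ‖u - v‖ := mul_lt_of_lt_one_left (norm_pos_iff.2 huv') (by exact_mod_cast hk)
  refine ⟨fun p ↦ log ((φ p.1 - φ p.2) / (p.1 - p.2)), ?_, fun {u v} huv ↦ ?_⟩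
  · exact ContinuousOn.clog
      (ContinuousOn.div (by fun_prop) (by fun_prop) fun p hp ↦ sub_ne_zero.2 hp)
      fun p hp ↦ hslit hp
  · rw [Complex.exp_log (Complex.slitPlane_ne_zero (hslit huv)),
      div_mul_cancel₀ _ (sub_ne_zero.2 huv)]

theorem lipschitzWith_max_one_sub_dist_div_smul {E : Type*} [NormedAddCommGroup E]
    [NormedSpace ℝ E] (c v : E) {ρ : NNReal} :
    LipschitzWith (‖v‖₊ / ρ) fun z ↦ max (1 - dist z c / ρ) 0 • v := by
  have hcone : LipschitzWith (ρ⁻¹) fun z ↦ max (1 - dist z c / ρ) 0 := by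
    refine LipschitzWith.max_const (LipschitzWith.of_dist_le_mul fun x y ↦ ?_) 0
    have hdist : 1 - dist x c / ρ - (1 - dist y c / ρ) = (ρ : ℝ)⁻¹ * (dist y c - dist x c) := by
      ring
    rw [Real.dist_eq, hdist, abs_mul, abs_of_nonneg (by positivity), dist_comm x y]
    push_cast
    gcongr
    exact abs_dist_sub_le y x c
  refine LipschitzWith.of_dist_le_mul fun x y ↦ ?_
  rw [dist_eq_norm, ← sub_smul, norm_smul, ← dist_eq_norm]
  calc _ ≤ (ρ⁻¹ : NNReal) * dist x y * ‖v‖ := by gcongr; exact hcone.dist_le_mul x y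
    _ = _ := by push_cast; ring

/-- An orientation-preserving homeomorphism of the plane supported in `N`. -/
structure IsPush (N : Set ℂ) (φ : ℂ ≃ₜ ℂ) : Prop where
  orientationPreserving : OrientationPreserving φ
  eq_self : ∀ {z}, z ∉ N → φ z = z

namespace IsPush

variable {N M : Set ℂ} {φ ψ : ℂ ≃ₜ ℂ}

theorem mono (hφ : IsPush N φ) (hNM : N ⊆ M) : IsPush M φ :=
  ⟨hφ.orientationPreserving, fun hz ↦ hφ.eq_self fun h ↦ hz (hNM h)⟩

theorem trans (hφ : IsPush N φ) (hψ : IsPush N ψ) : IsPush N (φ.trans ψ) :=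
  ⟨hφ.orientationPreserving.trans hψ.orientationPreserving, fun hz ↦ by
    rw [Homeomorph.trans_apply, hφ.eq_self hz, hψ.eq_self hz]⟩

theorem symm (hφ : IsPush N φ) : IsPush N φ.symm :=
  ⟨hφ.orientationPreserving.symm, fun hz ↦ by rw [φ.symm_apply_eq, hφ.eq_self hz]⟩

theorem conj {h : ℂ ≃ₜ ℂ} (hφ : IsPush N φ) (hh : OrientationPreserving h) :
    IsPush (h '' N) ((h.symm.trans φ).trans h) :=
  ⟨(hh.symm.trans hφ.orientationPreserving).trans hh, fun {z} hz ↦ by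
    have hz' : h.symm z ∉ N := fun hN ↦ hz ⟨_, hN, h.apply_symm_apply z⟩
    simp [hφ.eq_self hz']⟩

theorem mapsTo (hφ : IsPush N φ) : Set.MapsTo φ N N := by
  intro z hz
  by_contra hφz
  rw [φ.injective (hφ.eq_self hφz)] at hφz
  exact hφz hz

end IsPush

theorem exists_isPush_ball {c c' : ℂ} {ρ : ℝ} (hc : c' ∈ Metric.ball c ρ) :
    ∃ φ, IsPush (Metric.ball c ρ) φ ∧ φ c = c' := by
  lift ρ to NNReal using Metric.nonempty_ball.1 ⟨c', hc⟩ |>.le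
  rw [Metric.mem_ball, dist_eq_norm] at hc
  have hρ : 0 < ρ := NNReal.coe_pos.1 ((norm_nonneg _).trans_lt hc)
  have hlip := lipschitzWith_max_one_sub_dist_div_smul c (c' - c) (ρ := ρ)
  have hk : ‖c' - c‖₊ / ρ < 1 := (div_lt_one hρ).2 hc
  obtain ⟨φ, hφ⟩ := exists_homeomorph_eq_add hlip hk
  refine ⟨φ, ⟨.of_eq_add hlip hk hφ, fun {z} hz ↦ ?_⟩, by simp [hφ]⟩
  have hz' : 1 ≤ dist z c / ρ := (one_le_div (by exact_mod_cast hρ)).2 (not_lt.1 hz)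
  rw [hφ, max_eq_right (by linarith), zero_smul, add_zero]

theorem exists_isPush {N : Set ℂ} (hN : IsOpen N) (hconn : IsPreconnected N) {a b : ℂ}
    (ha : a ∈ N) (hb : b ∈ N) : ∃ φ, IsPush N φ ∧ φ a = b := by
  refine hconn.induction₂ (fun a b ↦ ∃ φ, IsPush N φ ∧ φ a = b) (fun a ha ↦ ?_) ?_ ?_ ha hb
  · obtain ⟨ρ, hρ, hball⟩ := Metric.isOpen_iff.1 hN a ha
    filter_upwards [mem_nhdsWithin_of_mem_nhds (Metric.ball_mem_nhds a hρ)] with b hb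
    obtain ⟨φ, hφ, hφa⟩ := exists_isPush_ball hb
    exact ⟨φ, hφ.mono hball, hφa⟩
  · rintro a b c - - - ⟨φ, hφ, rfl⟩ ⟨ψ, hψ, rfl⟩
    exact ⟨φ.trans ψ, hφ.trans hψ, rfl⟩
  · rintro a b - - ⟨φ, hφ, rfl⟩
    exact ⟨φ.symm, hφ.symm, φ.symm_apply_apply a⟩

/-! ### Free sets -/

/-- A set is free for `h` if it is disjoint from its image. -/
def IsFree {X : Type*} (h : X → X) (N : Set X) : Prop := Disjoint (h '' N) N

namespace IsFree

variable {X : Type*} {h : X → X} {N M : Set X}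

theorem apply_notMem (hN : IsFree h N) {z : X} (hz : z ∈ N) : h z ∉ N :=
  Set.disjoint_left.1 hN (Set.mem_image_of_mem h hz)

theorem of_forall (hN : ∀ z ∈ N, h z ∉ N) : IsFree h N :=
  Set.disjoint_left.2 (Set.forall_mem_image.2 hN)

theorem mono (hN : IsFree h N) (hMN : M ⊆ N) : IsFree h M :=
  Disjoint.mono (Set.image_mono hMN) hMN hN

theorem apply_notMem_of_mem_closure [TopologicalSpace X] (hh : Continuous h) (hN : IsFree h N)
    (hopen : IsOpen N) {z : X} (hz : z ∈ closure N) : h z ∉ N :=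
  Set.disjoint_left.1 (Disjoint.closure_left hN hopen)
    (image_closure_subset_closure_image hh (Set.mem_image_of_mem h hz))

theorem apply_notMem_closure [TopologicalSpace X] (hh : IsOpenMap h) (hN : IsFree h N)
    (hopen : IsOpen N) {z : X} (hz : z ∈ N) : h z ∉ closure N :=
  Set.disjoint_left.1 (Disjoint.closure_right hN (hh N hopen)) (Set.mem_image_of_mem h hz)

end IsFree

theorem exists_isOpen_disjoint_image {X Y : Type*} [TopologicalSpace X] [TopologicalSpace Y]
    [T2Space Y] {f : X → Y} (hf : Continuous f) {K : Set X} {L : Set Y} (hK : IsCompact K)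
    (hL : IsCompact L) (hKL : Disjoint (f '' K) L) :
    ∃ U V, IsOpen U ∧ K ⊆ U ∧ IsOpen V ∧ L ⊆ V ∧ Disjoint (f '' U) V := by
  obtain ⟨W, V, hW, hV, hKW, hLV, hWV⟩ :=
    SeparatedNhds.of_isCompact_isCompact (hK.image hf) hL hKL
  exact ⟨f ⁻¹' W, V, hW.preimage hf, Set.image_subset_iff.1 hKW, hV, hLV,
    hWV.mono_left (Set.image_preimage_subset f W)⟩

theorem IsFree.exists_isOpen {X : Type*} [TopologicalSpace X] [T2Space X] {h : X → X}
    (hh : Continuous h) {K : Set X} (hK : IsCompact K) (hfree : IsFree h K) :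
    ∃ U, IsOpen U ∧ K ⊆ U ∧ IsFree h U := by
  obtain ⟨U, V, hU, hKU, hV, hKV, hUV⟩ := exists_isOpen_disjoint_image hh hK hK hfree
  exact ⟨U ∩ V, hU.inter hV, Set.subset_inter hKU hKV,
    Disjoint.mono (Set.image_mono Set.inter_subset_left) Set.inter_subset_right hUV⟩

theorem exists_isFree_ball {X : Type*} [MetricSpace X] [ProperSpace X] {h : X → X}
    (hh : Continuous h) (hfix : ∀ z, h z ≠ z) (x : X) :
    ∃ r > 0, ∃ y ∈ Metric.closedBall x r, h y ∈ Metric.closedBall x r ∧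
      IsFree h (Metric.ball x r) := by
  have : Nonempty X := ⟨x⟩
  obtain ⟨y, hy⟩ : ∃ y, ∀ z, max (dist y x) (dist (h y) x) ≤ max (dist z x) (dist (h z) x) :=
    Continuous.exists_forall_le (by fun_prop)
      (tendsto_atTop_mono (fun _ ↦ le_max_left _ _) (tendsto_dist_right_cocompact_atTop x))
  refine ⟨max (dist y x) (dist (h y) x), ?_, y,
    Metric.mem_closedBall.2 (le_max_left _ _), Metric.mem_closedBall.2 (le_max_right _ _),
    .of_forall fun z hz hhz ↦ (hy z).not_gt (max_lt hz hhz)⟩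
  by_contra hr
  obtain ⟨hyx, hhyx⟩ := max_le_iff.1 (not_lt.1 hr)
  exact hfix y ((dist_le_zero.1 hhyx).trans (dist_le_zero.1 hyx).symm)

section Segments

variable {E : Type*} [NormedAddCommGroup E] [NormedSpace ℝ E]

theorem isCompact_segment (x y : E) : IsCompact (segment ℝ x y) := by
  rw [segment_eq_image_lineMap]
  exact isCompact_Icc.image (by fun_prop)

theorem exists_isPreconnected_nhd_segment {x y : E} {U : Set E} (hU : IsOpen U)
    (hxy : segment ℝ x y ⊆ U) :
    ∃ N, IsOpen N ∧ IsPreconnected N ∧ segment ℝ x y ⊆ N ∧ N ⊆ U := by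
  obtain ⟨δ, hδ, hsub⟩ := (isCompact_segment x y).exists_thickening_subset_open hU hxy
  exact ⟨_, Metric.isOpen_thickening, ((convex_segment x y).thickening δ).isPreconnected,
    Metric.self_subset_thickening hδ _, hsub⟩

theorem segment_subset_insert_ball {x w : E} {r : ℝ} (hr : 0 < r)
    (hw : w ∈ Metric.closedBall x r) : segment ℝ x w ⊆ insert w (Metric.ball x r) := by
  rw [← insert_endpoints_openSegment]
  refine Set.insert_subset (.inr (Metric.mem_ball_self hr)) (Set.insert_subset_insert ?_)
  rw [← closure_ball x hr.ne'] at hw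
  simpa only [Metric.isOpen_ball.interior_eq] using
    (convex_ball x r).openSegment_interior_closure_subset_interior
      (by simpa [Metric.isOpen_ball.interior_eq] using hr) hw

variable {h : E ≃ₜ E} {x y : E} {r : ℝ}

theorem isFree_segment (hball : IsFree h (Metric.ball x r)) (hr : 0 < r)
    (hy : y ∈ Metric.closedBall x r) (hfix : h y ≠ y) : IsFree h (segment ℝ x y) := by
  have hclosure := closure_ball x hr.ne'
  refine .of_forall fun z hz hhz ↦ ?_
  rcases segment_subset_insert_ball hr hy hz with hzy | hz <;>
    rcases segment_subset_insert_ball hr hy hhz with hhz | hhz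
  · exact hfix (hzy ▸ hhz)
  · exact hball.apply_notMem_of_mem_closure h.continuous Metric.isOpen_ball
      (by rwa [hzy, hclosure]) hhz
  · exact hball.apply_notMem_closure h.isOpenMap Metric.isOpen_ball hz (by rwa [hhz, hclosure])
  · exact hball.apply_notMem hz hhz

theorem isFree_segment_apply (hball : IsFree h (Metric.ball x r)) (hr : 0 < r)
    (hhy : h y ∈ Metric.closedBall x r) (hfix : h y ≠ y) : IsFree h (segment ℝ x (h y)) := by
  have hclosure := closure_ball x hr.ne'
  refine .of_forall fun z hz hhz ↦ ?_
  rcases segment_subset_insert_ball hr hhy hhz with hhz | hhz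
  · rw [h.injective hhz] at hz
    rcases segment_subset_insert_ball hr hhy hz with hz | hz
    · exact hfix hz.symm
    · exact hball.apply_notMem_closure h.isOpenMap Metric.isOpen_ball hz (by rwa [hclosure])
  · refine hball.apply_notMem_of_mem_closure h.continuous Metric.isOpen_ball ?_ hhz
    rw [hclosure]
    exact (convex_closedBall x r).segment_subset (Metric.mem_closedBall_self hr.le) hhy hz

theorem disjoint_image_segment (hball : IsFree h (Metric.ball x r))
    (hball₂ : IsFree (h ∘ h) (Metric.ball x r)) (hr : 0 < r) (hy : y ∈ Metric.closedBall x r)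
    (hhy : h y ∈ Metric.closedBall x r) (hfix : h y ≠ y) :
    Disjoint (h ∘ h '' segment ℝ x y) (segment ℝ x (h y)) := by
  refine Set.disjoint_left.2 (Set.forall_mem_image.2 fun z hz hhhz ↦ ?_)
  rcases segment_subset_insert_ball hr hhy hhhz with hhhz | hhhz
  · refine (isFree_segment hball hr hy hfix).apply_notMem hz ?_
    rw [h.injective hhhz]
    exact right_mem_segment ℝ x y
  · rcases segment_subset_insert_ball hr hy hz with hzy | hz
    · exact hball.apply_notMem_of_mem_closure h.continuous Metric.isOpen_ball
        (by rwa [hzy, closure_ball x hr.ne']) hhhz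
    · exact hball₂.apply_notMem hz hhhz

theorem exists_free_nhds_segments (hball : IsFree h (Metric.ball x r))
    (hball₂ : IsFree (h ∘ h) (Metric.ball x r)) (hr : 0 < r) (hy : y ∈ Metric.closedBall x r)
    (hhy : h y ∈ Metric.closedBall x r) (hfix : h y ≠ y) :
    ∃ M N, (IsOpen M ∧ IsPreconnected M ∧ IsFree h M ∧ segment ℝ x y ⊆ M) ∧
      (IsOpen N ∧ IsPreconnected N ∧ IsFree h N ∧ segment ℝ x (h y) ⊆ N) ∧
      Disjoint (h ∘ h '' M) N := by
  have hK := isCompact_segment x y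
  have hL := isCompact_segment x (h y)
  obtain ⟨U, hU, hKU, hUfree⟩ := (isFree_segment hball hr hy hfix).exists_isOpen h.continuous hK
  obtain ⟨V, hV, hLV, hVfree⟩ :=
    (isFree_segment_apply hball hr hhy hfix).exists_isOpen h.continuous hL
  obtain ⟨U', V', hU', hKU', hV', hLV', hUV⟩ := exists_isOpen_disjoint_image
    (h.continuous.comp h.continuous) hK hL (disjoint_image_segment hball hball₂ hr hy hhy hfix)
  obtain ⟨M, hM, hMconn, hKM, hMU⟩ :=
    exists_isPreconnected_nhd_segment (hU.inter hU') (Set.subset_inter hKU hKU')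
  obtain ⟨N, hN, hNconn, hLN, hNV⟩ :=
    exists_isPreconnected_nhd_segment (hV.inter hV') (Set.subset_inter hLV hLV')
  exact ⟨M, N, ⟨hM, hMconn, hUfree.mono (hMU.trans Set.inter_subset_left), hKM⟩,
    ⟨hN, hNconn, hVfree.mono (hNV.trans Set.inter_subset_left), hLN⟩,
    hUV.mono (Set.image_mono (hMU.trans Set.inter_subset_right))
      (hNV.trans Set.inter_subset_right)⟩

end Segments

/-! ### Brouwer homeomorphisms -/

/-- A Brouwer homeomorphism: an orientation-preserving homeomorphism of the plane without fixed
points. -/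
structure IsBrouwer (h : ℂ ≃ₜ ℂ) : Prop where
  orientationPreserving : OrientationPreserving h
  apply_ne : ∀ z, h z ≠ z

/-- Some Brouwer homeomorphism has a point of (not necessarily minimal) period `n`. -/
def HasBrouwerCycle (n : ℕ) : Prop :=
  ∃ h : ℂ ≃ₜ ℂ, IsBrouwer h ∧ ∃ x, Function.IsPeriodicPt h n x

theorem iterate_eq_iterate_of_agree {X : Type*} {g h : X → X} {x : X} {n : ℕ}
    (hgh : ∀ i < n, g (h^[i] x) = h^[i + 1] x) : g^[n] x = h^[n] x := by
  induction n with
  | zero => rfl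
  | succ n ih =>
    rw [Function.iterate_succ_apply', ih fun i hi ↦ hgh i (by omega), hgh n n.lt_succ_self]

theorem IsBrouwer.trans_isPush {h φ : ℂ ≃ₜ ℂ} {N : Set ℂ} (hh : IsBrouwer h) (hφ : IsPush N φ)
    (hN : IsFree h N) : IsBrouwer (h.trans φ) := by
  refine ⟨hh.orientationPreserving.trans hφ.orientationPreserving, fun z hz ↦ ?_⟩
  rw [Homeomorph.trans_apply] at hz
  by_cases hhz : h z ∈ N
  · exact hN.apply_notMem (hz ▸ hφ.mapsTo hhz) hhz
  · exact hh.apply_ne z (hφ.eq_self hhz ▸ hz)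

theorem IsBrouwer.hasBrouwerCycle_of_mem {h : ℂ ≃ₜ ℂ} (hh : IsBrouwer h) {N : Set ℂ}
    (hN : IsOpen N) (hconn : IsPreconnected N) (hfree : IsFree h N) {b : ℂ} (hb : b ∈ N) {m : ℕ}
    (hm : 0 < m) (hbm : h^[m] b ∈ N) : ∃ j, 0 < j ∧ j ≤ m ∧ HasBrouwerCycle j := by
  classical
  have hreturn : ∃ i, h^[i + 1] b ∈ N := ⟨m - 1, by rwa [Nat.sub_add_cancel hm]⟩
  obtain ⟨φ, hφ, hφb⟩ := exists_isPush hN hconn (Nat.find_spec hreturn) hb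
  refine ⟨Nat.find hreturn + 1, Nat.succ_pos _, ?_, h.trans φ, hh.trans_isPush hφ hfree, b, ?_⟩
  · have : Nat.find hreturn ≤ m - 1 := Nat.find_min' _ (by rwa [Nat.sub_add_cancel hm])
    omega
  · have hagree := iterate_eq_iterate_of_agree (g := h.trans φ) (h := h) (x := b)
      (n := Nat.find hreturn) fun i hi ↦ by
        rw [Homeomorph.trans_apply, ← Function.iterate_succ_apply' h]
        exact hφ.eq_self (Nat.find_min hreturn hi)
    rw [Function.IsPeriodicPt, Function.IsFixedPt, Function.iterate_succ_apply', hagree,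
      Homeomorph.trans_apply, ← Function.iterate_succ_apply' h, hφb]

-- Pushing `x` to `h y` in `N` after `h`, and then `h y` to `h x` in `h '' M`, closes the orbit of
-- `h x` one step earlier.
theorem IsBrouwer.hasBrouwerCycle_pred {h : ℂ ≃ₜ ℂ} (hh : IsBrouwer h) {M N : Set ℂ}
    (hM : IsOpen M) (hMconn : IsPreconnected M) (hMfree : IsFree h M)
    (hN : IsOpen N) (hNconn : IsPreconnected N) (hNfree : IsFree h N)
    (hMN : Disjoint (h ∘ h '' M) N) {x y : ℂ} (hxM : x ∈ M) (hyM : y ∈ M) (hxN : x ∈ N)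
    (hyN : h y ∈ N) {n : ℕ} (hx : Function.IsPeriodicPt h (n + 2) x)
    (horbit : ∀ i < n + 1, h^[i + 1] x ∉ M ∪ N) : HasBrouwerCycle (n + 1) := by
  obtain ⟨φ, hφ, hφx⟩ := exists_isPush hN hNconn hxN hyN
  obtain ⟨ψ, hψ, hψy⟩ := exists_isPush hM hMconn hyM hxM
  obtain ⟨φ', hφ', hφ'y⟩ : ∃ φ', IsPush (h '' M) φ' ∧ φ' (h y) = h x :=
    ⟨_, hψ.conj hh.orientationPreserving, by simp [hψy]⟩
  have hfree : IsFree (h.trans φ) (h '' M) := by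
    refine .of_forall (Set.forall_mem_image.2 fun z hz hz' ↦ ?_)
    have hhhz : h (h z) ∉ N := Set.disjoint_left.1 hMN ⟨z, hz, rfl⟩
    rw [Homeomorph.trans_apply, hφ.eq_self hhhz, h.injective.mem_set_image] at hz'
    exact hMfree.apply_notMem hz hz'
  refine ⟨_, (hh.trans_isPush hφ hNfree).trans_isPush hφ' hfree, h x, ?_⟩
  rw [Function.IsPeriodicPt, Function.IsFixedPt, Function.iterate_succ_apply',
    iterate_eq_iterate_of_agree (h := h)]
  · have hperiod : h (h^[n] (h x)) = x := by
      rw [← Function.iterate_succ_apply' h, ← Function.iterate_succ_apply h]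
      exact hx
    simp [hperiod, hφx, hφ'y]
  · intro i hi
    rw [← Function.iterate_succ_apply, ← Function.iterate_succ_apply, Homeomorph.trans_apply _ φ',
      Homeomorph.trans_apply, ← Function.iterate_succ_apply' h,
      hφ.eq_self fun hN ↦ horbit (i + 1) (by omega) (.inr hN), hφ'.eq_self]
    rw [Function.iterate_succ_apply', h.injective.mem_set_image]
    exact fun hM ↦ horbit i (by omega) (.inl hM)

theorem not_hasBrouwerCycle {n : ℕ} (hn : 0 < n) : ¬ HasBrouwerCycle n := by
  induction n using Nat.strong_induction_on with
  | _ n ih =>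
  rintro ⟨h, hh, x, hx⟩
  have hfree_iterate {N : Set ℂ} (hN : IsOpen N) (hconn : IsPreconnected N) (hfree : IsFree h N)
      {b : ℂ} (hb : b ∈ N) {m : ℕ} (hm : 0 < m) (hmn : m < n) : h^[m] b ∉ N := fun hbm ↦ by
    obtain ⟨j, hj, hjm, hcycle⟩ := hh.hasBrouwerCycle_of_mem hN hconn hfree hb hm hbm
    exact ih j (hjm.trans_lt hmn) hj hcycle
  match n with
  | 1 => exact hh.apply_ne x hx
  | 2 => exact hh.orientationPreserving.apply_apply_ne hh.apply_ne x hx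
  | n + 3 =>
    obtain ⟨r, hr, y, hy, hhy, hball⟩ := exists_isFree_ball h.continuous hh.apply_ne x
    have hball₂ : IsFree (h ∘ h) (Metric.ball x r) := .of_forall fun z hz ↦
      hfree_iterate Metric.isOpen_ball (convex_ball x r).isPreconnected hball hz two_pos (by omega)
    obtain ⟨M, N, ⟨hM, hMconn, hMfree, hMs⟩, ⟨hN, hNconn, hNfree, hNs⟩, hMN⟩ :=
      exists_free_nhds_segments hball hball₂ hr hy hhy (hh.apply_ne y)
    have hxM := hMs (left_mem_segment ℝ x y)
    have hxN := hNs (left_mem_segment ℝ x (h y))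
    refine ih (n + 2) (by omega) (by omega) (hh.hasBrouwerCycle_pred hM hMconn hMfree
      hN hNconn hNfree hMN hxM (hMs (right_mem_segment ℝ x y)) hxN
      (hNs (right_mem_segment ℝ x (h y))) hx fun i hi hmem ↦ ?_)
    exact hmem.elim (hfree_iterate hM hMconn hMfree hxM (by omega) (by omega))
      (hfree_iterate hN hNconn hNfree hxN (by omega) (by omega))

theorem IsBrouwer.iterate_notMem {h : ℂ ≃ₜ ℂ} (hh : IsBrouwer h) {N : Set ℂ} (hN : IsOpen N)
    (hconn : IsPreconnected N) (hfree : IsFree h N) {b : ℂ} (hb : b ∈ N) {m : ℕ} (hm : 0 < m) :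
    h^[m] b ∉ N := fun hbm ↦ by
  obtain ⟨j, hj, -, hcycle⟩ := hh.hasBrouwerCycle_of_mem hN hconn hfree hb hm hbm
  exact not_hasBrouwerCycle hj hcycle

/-! ### The square of a homeomorphism of the plane preserves orientation -/

theorem continuousAt_comp_log {X Y : Type*} [TopologicalSpace X] [TopologicalSpace Y]
    {F : X × ℂ → Y} (hF : Continuous F)
    (hper : ∀ x, Function.Periodic (fun s ↦ F (x, s)) (2 * π * I)) {x₀ : X} {w₀ : ℂ}
    (hw₀ : w₀ ≠ 0) : ContinuousAt (fun p : X × ℂ ↦ F (p.1, log p.2)) (x₀, w₀) := by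
  let branch : X × ℂ → ℂ := fun p ↦ log (p.2 / w₀) + log w₀
  have hbranch : ContinuousAt branch (x₀, w₀) :=
    (ContinuousAt.clog (by fun_prop) (by simp [div_self hw₀])).add continuousAt_const
  have hcont : ContinuousAt (fun p : X × ℂ ↦ F (p.1, branch p)) (x₀, w₀) :=
    hF.continuousAt.comp (continuousAt_fst.prodMk hbranch)
  refine hcont.congr ?_
  filter_upwards [continuousAt_snd.eventually_ne hw₀] with p hp
  have hexp : exp (branch p) = exp (log p.2) := by
    rw [Complex.exp_add, Complex.exp_log (div_ne_zero hp hw₀), Complex.exp_log hw₀,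
      Complex.exp_log hp, div_mul_cancel₀ _ hw₀]
  obtain ⟨k, hk⟩ := Complex.exp_eq_exp_iff_exists_int.1 hexp
  rw [hk]
  exact (hper p.1).int_mul k _

/-- The homeomorphism `h` of the plane has degree `d`: along a circle around any `v`, the argument
of `h u - h v` grows by `2πd`. The function `A (v, s)` is a logarithm of `h (v + exp s) - h v`. -/
def HasDegree (h : ℂ ≃ₜ ℂ) (d : ℤ) : Prop :=
  ∃ A : ℂ × ℂ → ℂ, Continuous A ∧ (∀ v s, exp (A (v, s)) = h (v + exp s) - h v) ∧
    ∀ v, Function.Periodic (fun s ↦ A (v, s) - d * s) (2 * π * I)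

namespace HasDegree

variable {h g : ℂ ≃ₜ ℂ} {d e : ℤ}

theorem refl : HasDegree (Homeomorph.refl ℂ) 1 :=
  ⟨Prod.snd, continuous_snd, by simp, by simp [Function.Periodic]⟩

theorem trans (hh : HasDegree h d) (hg : HasDegree g e) : HasDegree (h.trans g) (d * e) := by
  obtain ⟨A, hA, hAexp, hAper⟩ := hh
  obtain ⟨B, hB, hBexp, hBper⟩ := hg
  refine ⟨fun p ↦ B (h p.1, A p), by fun_prop, fun v s ↦ by simp [hBexp, hAexp], fun v s ↦ ?_⟩
  have hs : A (v, s + 2 * π * I) = A (v, s) + d * (2 * π * I) := by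
    linear_combination hAper v s
  simp only [hs, Int.cast_mul]
  linear_combination (hBper (h v)).int_mul d (A (v, s))

theorem unique (hd : HasDegree h d) (he : HasDegree h e) : d = e := by
  obtain ⟨A, hA, hAexp, hAper⟩ := hd
  obtain ⟨B, hB, hBexp, hBper⟩ := he
  have hdiff := sub_eq_sub_of_exp_eq_exp hA hB (fun p ↦ (hAexp p.1 p.2).trans (hBexp p.1 p.2).symm)
    (0, 0 + 2 * π * I) (0, 0)
  have hde : (d : ℂ) * (2 * π * I) = e * (2 * π * I) := by
    linear_combination hdiff - hAper 0 0 + hBper 0 0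
  exact_mod_cast mul_right_cancel₀ Complex.two_pi_I_ne_zero hde

theorem orientationPreserving (hh : HasDegree h 1) : OrientationPreserving h := by
  obtain ⟨A, hA, hAexp, hAper⟩ := hh
  refine ⟨fun p ↦ A (p.2, log (p.1 - p.2)) - log (p.1 - p.2), fun p hp ↦ ?_, fun {u v} huv ↦ ?_⟩
  · have hF : Continuous fun q : ℂ × ℂ ↦ A q - q.2 := by fun_prop
    have hcont : ContinuousAt (fun q : ℂ × ℂ ↦ A (q.1, log q.2) - log q.2) (p.2, p.1 - p.2) :=
      continuousAt_comp_log hF (by simpa using hAper) (sub_ne_zero.2 hp)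
    exact (hcont.comp (f := fun p : ℂ × ℂ ↦ (p.2, p.1 - p.2)) (by fun_prop)).continuousWithinAt
  · have huv' : u - v ≠ 0 := sub_ne_zero.2 huv
    rw [Complex.exp_sub, hAexp, Complex.exp_log huv', div_mul_cancel₀ _ huv', add_sub_cancel]

end HasDegree

theorem exists_hasDegree (h : ℂ ≃ₜ ℂ) : ∃ d, HasDegree h d := by
  have hne (p : ℂ × ℂ) : h (p.1 + exp p.2) - h p.1 ≠ 0 := by simp [sub_eq_zero]
  obtain ⟨A, hA, hAexp⟩ := exists_continuous_log (by fun_prop) hne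
  have hexp (p : ℂ × ℂ) : exp (A (p.1, p.2 + 2 * π * I)) = exp (A p) := by
    rw [hAexp, hAexp, Complex.exp_add, Complex.exp_two_pi_mul_I, mul_one]
  obtain ⟨d, hd⟩ := Complex.exp_eq_exp_iff_exists_int.1 (hexp (0, 0))
  refine ⟨d, A, hA, fun v s ↦ hAexp (v, s), fun v s ↦ ?_⟩
  linear_combination hd + sub_eq_sub_of_exp_eq_exp (by fun_prop) hA hexp (v, s) (0, 0)

theorem orientationPreserving_trans_self (h : ℂ ≃ₜ ℂ) : OrientationPreserving (h.trans h) := by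
  obtain ⟨d, hd⟩ := exists_hasDegree h
  obtain ⟨e, he⟩ := exists_hasDegree h.symm
  have hde : d * e = 1 := (hd.trans he).unique (by simpa using HasDegree.refl)
  have hdd : d * d = 1 := by
    rcases Int.eq_one_or_neg_one_of_mul_eq_one hde with rfl | rfl <;> norm_num
  exact HasDegree.orientationPreserving (hdd ▸ hd.trans hd)

/-! ### The universal cover of the annulus -/

/-- The universal covering map of the annulus, with `ℝ²` read as the complex plane. -/
def annCover (z : ℂ) : Ann := projA (z.re, z.im)

theorem isOpenQuotientMap_annCover : IsOpenQuotientMap annCover := by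
  have hcoe : IsOpenQuotientMap ((↑) : ℝ → AddCircle (1 : ℝ)) :=
    QuotientAddGroup.isOpenQuotientMap_mk
  exact (hcoe.prodMap IsOpenQuotientMap.id).comp
    Complex.equivRealProdCLM.toHomeomorph.isOpenQuotientMap

theorem continuous_annCover : Continuous annCover := isOpenQuotientMap_annCover.continuous

instance : LocallyPathConnectedSpace Ann :=
  isOpenQuotientMap_annCover.isQuotientMap.locallyPathConnectedSpace

theorem annCover_eq_annCover_iff {z w : ℂ} : annCover z = annCover w ↔ ∃ k : ℤ, z = w + k := by
  simp only [annCover, projA, Prod.mk.injEq, Complex.ext_iff]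
  constructor
  · rintro ⟨hre, him⟩
    obtain ⟨k, hk⟩ := (AddCircle.coe_eq_zero_iff (1 : ℝ)).1
      (show ((z.re - w.re : ℝ) : AddCircle (1 : ℝ)) = 0 by rw [AddCircle.coe_sub, hre, sub_self])
    refine ⟨k, ?_, by simpa using him⟩
    rw [zsmul_one] at hk
    simp [hk]
  · rintro ⟨k, hre, him⟩
    exact ⟨by simp [hre], by simpa using him⟩

theorem annCover_add_intCast (z : ℂ) (k : ℤ) : annCover (z + k) = annCover z :=
  annCover_eq_annCover_iff.2 ⟨k, rfl⟩

theorem exists_lift_through_annCover {X : Type*} [TopologicalSpace X]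
    [LocallyPathConnectedSpace X] [SimplyConnectedSpace X] {g : X → Ann} (hg : Continuous g)
    {x₀ : X} {w₀ : ℂ} (hw₀ : annCover w₀ = g x₀) :
    ∃ F : X → ℂ, Continuous F ∧ F x₀ = w₀ ∧ ∀ x, annCover (F x) = g x := by
  obtain ⟨F, ⟨hF₀, hF⟩, -⟩ := (AddCircle.isCoveringMap_coe (1 : ℝ)).existsUnique_continuousMap_lifts
    ⟨fun x ↦ (g x).1, by fun_prop⟩ x₀ w₀.re (congrArg Prod.fst hw₀)
  refine ⟨fun x ↦ ⟨F x, (g x).2⟩, ?_, ?_, fun x ↦ Prod.ext (congrFun hF x) rfl⟩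
  · exact Complex.equivRealProdCLM.symm.continuous.comp (F.continuous.prodMk (by fun_prop))
  · exact Complex.ext hF₀ (congrArg Prod.snd hw₀).symm

theorem eq_of_annCover_comp_eq {X : Type*} [TopologicalSpace X] [PreconnectedSpace X]
    {F F' : X → ℂ} (hF : Continuous F) (hF' : Continuous F')
    (h : ∀ x, annCover (F x) = annCover (F' x)) {x₀ : X} (h₀ : F x₀ = F' x₀) : F = F' := by
  have hre := (AddCircle.isCoveringMap_coe (1 : ℝ)).eq_of_comp_eq
    (Complex.continuous_re.comp hF) (Complex.continuous_re.comp hF')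
    (funext fun x ↦ congrArg Prod.fst (h x)) x₀ (congrArg Complex.re h₀)
  exact funext fun x ↦ Complex.ext (congrFun hre x) (congrArg Prod.snd (h x))

theorem exists_homeomorph_lift (f : Ann ≃ₜ Ann) :
    ∃ F : ℂ ≃ₜ ℂ, ∀ z, annCover (F z) = f (annCover z) := by
  obtain ⟨w₀, hw₀⟩ := isOpenQuotientMap_annCover.surjective (f (annCover 0))
  obtain ⟨F, hF, hF₀, hFlift⟩ :=
    exists_lift_through_annCover (f.continuous.comp continuous_annCover) (x₀ := 0) hw₀
  obtain ⟨F', hF', hF'₀, hF'lift⟩ :=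
    exists_lift_through_annCover (f.symm.continuous.comp continuous_annCover) (x₀ := w₀) (w₀ := 0)
      (by simp [hw₀])
  have hleft : F' ∘ F = id := eq_of_annCover_comp_eq (hF'.comp hF) continuous_id
    (fun z ↦ by simp [hF'lift, hFlift]) (x₀ := 0) (by simp [hF₀, hF'₀])
  have hright : F ∘ F' = id := eq_of_annCover_comp_eq (hF.comp hF') continuous_id
    (fun z ↦ by simp [hF'lift, hFlift]) (x₀ := w₀) (by simp [hF₀, hF'₀])
  exact ⟨⟨⟨F, F', congrFun hleft, congrFun hright⟩, hF, hF'⟩, hFlift⟩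

/-- The embedding of the annulus onto the punctured plane that turns `annCover` into
`z ↦ exp (2πiz)`; its upper end goes to the puncture. -/
def annToPlane (a : Ann) : ℂ := AddCircle.toCircle a.1 * exp (-(2 * π * a.2))

theorem continuous_annToPlane : Continuous annToPlane := by
  have htoCircle : Continuous fun a : Ann ↦ (AddCircle.toCircle a.1 : ℂ) :=
    continuous_subtype_val.comp (AddCircle.continuous_toCircle.comp continuous_fst)
  exact htoCircle.mul (by fun_prop)

theorem norm_annToPlane (a : Ann) : ‖annToPlane a‖ = Real.exp (-(2 * π * a.2)) := by
  rw [annToPlane, norm_mul, Circle.norm_coe, one_mul, Complex.norm_exp]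
  simp

theorem annToPlane_ne_zero (a : Ann) : annToPlane a ≠ 0 := by
  rw [← norm_pos_iff, norm_annToPlane]
  positivity

theorem norm_annToPlane_lt_norm_annToPlane_iff {a b : Ann} :
    ‖annToPlane a‖ < ‖annToPlane b‖ ↔ b.2 < a.2 := by
  rw [norm_annToPlane, norm_annToPlane, Real.exp_lt_exp, neg_lt_neg_iff,
    mul_lt_mul_iff_right₀ (by positivity)]

theorem annToPlane_injective : Function.Injective annToPlane := by
  intro a b hab
  have hsnd : a.2 = b.2 := by
    by_contra hne
    rcases lt_or_gt_of_ne hne with hlt | hlt <;>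
      exact (norm_annToPlane_lt_norm_annToPlane_iff.2 hlt).ne (by rw [hab])
  rw [annToPlane, annToPlane, hsnd] at hab
  exact Prod.ext (AddCircle.injective_toCircle one_ne_zero
    (Subtype.ext (mul_right_cancel₀ (Complex.exp_ne_zero _) hab))) hsnd

theorem annToPlane_annCover (z : ℂ) : annToPlane (annCover z) = exp (2 * π * I * z) := by
  simp only [annToPlane, annCover, projA]
  rw [AddCircle.toCircle_apply_mk, Circle.coe_exp, ← Complex.exp_add]
  congr 1
  apply Complex.ext <;> simp

/-! ### Loops crossing the annulus -/

theorem sub_eq_sub_of_exp_eq_exp_sub {X : Type*} [TopologicalSpace X] [PreconnectedSpace X]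
    {φ ψ w : X → ℂ} (hφ : Continuous φ) (hψ : Continuous ψ) (hw : Continuous w)
    (hexp : ∀ x, exp (φ x) = exp (ψ x) - w x) (hlt : ∀ x, ‖w x‖ < ‖exp (ψ x)‖) {x y : X}
    (hψxy : exp (ψ x) = exp (ψ y)) (hwxy : w x = w y) : φ x - φ y = ψ x - ψ y := by
  have hslit (x : X) : 1 - w x / exp (ψ x) ∈ Complex.slitPlane := by
    rw [sub_eq_add_neg]
    apply Complex.mem_slitPlane_of_norm_lt_one
    rw [norm_neg, norm_div, div_lt_one (norm_pos_iff.2 (Complex.exp_ne_zero _))]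
    exact hlt x
  have hlog : Continuous fun x ↦ log (1 - w x / exp (ψ x)) :=
    Continuous.clog (by fun_prop (disch := simp)) hslit
  have hsub := sub_eq_sub_of_exp_eq_exp hφ (hψ.add hlog) (fun x ↦ by
    rw [Pi.add_apply, Complex.exp_add, Complex.exp_log (Complex.slitPlane_ne_zero (hslit x)),
      hexp]
    field_simp [Complex.exp_ne_zero]) x y
  simpa [hψxy, hwxy] using hsub

-- The winding number of `t ↦ p (β t)` around `δ s` does not depend on `s`; it is `k` for points
-- above the loop and `0` for points below it.
theorem eq_zero_of_forall_annCover_ne {β : ℝ → ℂ} {δ : ℝ → Ann} (hβ : Continuous β)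
    (hδ : Continuous δ) (hne : ∀ s t, annCover (β t) ≠ δ s) {k : ℤ} (hk : β 1 = β 0 + k)
    (habove : ∀ t, (β t).im < (δ 0).2) (hbelow : ∀ t, (δ 1).2 < (β t).im) : k = 0 := by
  have hβ' : Continuous fun t ↦ annToPlane (annCover (β t)) :=
    continuous_annToPlane.comp (continuous_annCover.comp hβ)
  have hδ' : Continuous fun s ↦ annToPlane (δ s) := continuous_annToPlane.comp hδ
  have hloop : annCover (β 1) = annCover (β 0) := by rw [hk, annCover_add_intCast]
  obtain ⟨L, hL, hLexp⟩ := exists_continuous_log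
    (g := fun p : ℝ × ℝ ↦ annToPlane (annCover (β p.2)) - annToPlane (δ p.1))
    ((hβ'.comp continuous_snd).sub (hδ'.comp continuous_fst))
    fun p ↦ sub_ne_zero.2 (annToPlane_injective.ne (hne p.1 p.2))
  have hconst : L (0, 1) - L (1, 1) = L (0, 0) - L (1, 0) :=
    sub_eq_sub_of_exp_eq_exp (φ := fun s ↦ L (s, 1)) (ψ := fun s ↦ L (s, 0)) (by fun_prop)
      (by fun_prop) (fun s ↦ by simp only [hLexp, hloop]) 0 1
  have hupper : L (0, 1) - L (0, 0) = 2 * π * I * β 1 - 2 * π * I * β 0 := by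
    refine sub_eq_sub_of_exp_eq_exp_sub (φ := fun t ↦ L (0, t)) (ψ := fun t ↦ 2 * π * I * β t)
      (w := fun _ ↦ annToPlane (δ 0)) (by fun_prop) (by fun_prop) (by fun_prop)
      (fun t ↦ by rw [hLexp, annToPlane_annCover]) (fun t ↦ ?_) ?_ rfl
    · rw [← annToPlane_annCover]
      exact norm_annToPlane_lt_norm_annToPlane_iff.2 (habove t)
    · rw [← annToPlane_annCover, ← annToPlane_annCover, hloop]
  have hlower : L (1, 1) - L (1, 0) = log (-annToPlane (δ 1)) - log (-annToPlane (δ 1)) := by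
    have hlog := Complex.exp_log (neg_ne_zero.2 (annToPlane_ne_zero (δ 1)))
    refine sub_eq_sub_of_exp_eq_exp_sub (φ := fun t ↦ L (1, t))
      (ψ := fun _ ↦ log (-annToPlane (δ 1))) (w := fun t ↦ -annToPlane (annCover (β t)))
      (by fun_prop) (by fun_prop) (by fun_prop) (fun t ↦ ?_) (fun t ↦ ?_) rfl (by rw [hloop])
    · rw [hLexp, hlog]
      ring
    · rw [hlog, norm_neg, norm_neg]
      exact norm_annToPlane_lt_norm_annToPlane_iff.2 (hbelow t)
  have hzero : (k : ℂ) * (2 * π * I) = 0 := by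
    linear_combination hconst - hupper + hlower - 2 * π * I * hk
  exact_mod_cast (mul_eq_zero.1 hzero).resolve_right Complex.two_pi_I_ne_zero

theorem eq_zero_of_disjoint_of_unbounded {D : Set ℂ} (hD : IsOpen D) (hDconn : IsPreconnected D)
    {S : Set Ann} (hS : IsPreconnected S) (habove : UnbAbove S) (hbelow : UnbBelow S)
    (hDS : Disjoint (annCover '' D) S) {d : ℂ} {k : ℤ} (hd : d ∈ D) (hdk : d + k ∈ D) :
    k = 0 := by
  obtain ⟨β, hβD⟩ := (hD.isConnected_iff_isPathConnected.1 ⟨⟨d, hd⟩, hDconn⟩).joinedIn _ hd _ hdk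
  have hβ (t : ℝ) : β.extend t ∈ D := hβD _
  have hβrange : IsCompact (Set.range β.extend) := by
    rw [β.extend_range]
    exact isCompact_range β.continuous
  have hclosed : IsClosed (annCover '' Set.range β.extend) :=
    (hβrange.image continuous_annCover).isClosed
  obtain ⟨R, hR⟩ := (hβrange.image Complex.continuous_im).bddAbove
  obtain ⟨r, hr⟩ := (hβrange.image Complex.continuous_im).bddBelow
  obtain ⟨_, ⟨a, ha, rfl⟩, haR⟩ := not_bddAbove_iff.1 habove R
  obtain ⟨_, ⟨b, hb, rfl⟩, hbr⟩ := not_bddBelow_iff.1 hbelow r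
  have hSsub : S ⊆ (annCover '' Set.range β.extend)ᶜ := fun s hs ↦ by
    rintro ⟨_, ⟨t, rfl⟩, rfl⟩
    exact Set.disjoint_left.1 hDS ⟨_, hβ t, rfl⟩ hs
  have hScomp := hS.subset_connectedComponentIn ha hSsub
  obtain ⟨δ, hδV⟩ := (hclosed.isOpen_compl.connectedComponentIn.isConnected_iff_isPathConnected.1
    ⟨⟨a, hScomp ha⟩, isPreconnected_connectedComponentIn⟩).joinedIn _ (hScomp ha) _ (hScomp hb)
  have hδ (s : ℝ) : δ.extend s ∈ (annCover '' Set.range β.extend)ᶜ :=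
    connectedComponentIn_subset _ _ (hδV _)
  refine eq_zero_of_forall_annCover_ne β.continuous_extend δ.continuous_extend
    (fun s t h ↦ hδ s (h ▸ ⟨_, ⟨t, rfl⟩, rfl⟩)) (by simp) (fun t ↦ ?_) fun t ↦ ?_
  · rw [δ.extend_zero]
    exact (hR ⟨_, ⟨t, rfl⟩, rfl⟩).trans_lt haR
  · rw [δ.extend_one]
    exact hbr.trans_le (hr ⟨_, ⟨t, rfl⟩, rfl⟩)

/-! ### Unicoherence -/

theorem exists_continuous_eqOn_of_isClosed {X Y : Type*} [TopologicalSpace X] [TopologicalSpace Y]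
    {A B : Set X} (hA : IsClosed A) (hB : IsClosed B) (hAB : A ∪ B = Set.univ) {f g : X → Y}
    (hf : ContinuousOn f A) (hg : ContinuousOn g B) (hfg : Set.EqOn f g (A ∩ B)) :
    ∃ ψ : X → Y, Continuous ψ ∧ Set.EqOn ψ f A ∧ Set.EqOn ψ g B := by
  classical
  have hψA : Set.EqOn (A.piecewise f g) f A := A.piecewise_eqOn f g
  have hψB : Set.EqOn (A.piecewise f g) g B := fun x hx ↦ by
    by_cases hxA : x ∈ A
    · rw [hψA hxA, hfg ⟨hxA, hx⟩]
    · exact Set.piecewise_eq_of_notMem _ _ _ hxA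
  refine ⟨_, ?_, hψA, hψB⟩
  rw [← continuousOn_univ, ← hAB]
  exact (hf.congr hψA).union_of_isClosed (hg.congr hψB) hA hB

-- If `A ∩ B` splits into `P` and `Q`, let `l` be `0` on `P` and `1` on `Q`: gluing `exp (πil)` on
-- `A` with `exp (-πil)` on `B` gives a map that winds once when passing from `P` to `Q` through `A`
-- and back through `B`.
theorem isPreconnected_inter_of_exists_log {X : Type*} [TopologicalSpace X] [NormalSpace X]
    {A B : Set X} (hA : IsClosed A) (hB : IsClosed B) (hAconn : IsPreconnected A)
    (hBconn : IsPreconnected B) (hAB : A ∪ B = Set.univ)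
    (hlog : ∀ ψ φ : X → ℂ, Continuous ψ → (∀ x, ψ x ≠ 0) → Continuous φ →
      (∀ x ∈ B, exp (φ x) = ψ x) → ∃ Θ : X → ℂ, Continuous Θ ∧ ∀ x, exp (Θ x) = ψ x) :
    IsPreconnected (A ∩ B) := by
  rw [isPreconnected_closed_iff]
  rintro P Q hP hQ hPQ ⟨p, hp, hpP⟩ ⟨q, hq, hqQ⟩
  by_contra hempty
  obtain ⟨l, hlP, hlQ, -⟩ := exists_continuous_zero_one_of_isClosed
    ((hA.inter hB).inter hP) ((hA.inter hB).inter hQ)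
    (Set.disjoint_left.2 fun x hxP hxQ ↦ hempty ⟨x, hxP.1, hxP.2, hxQ.2⟩)
  let ω : X → ℂ := fun x ↦ π * I * l x
  have hω : Continuous ω := by fun_prop
  have hglue : Set.EqOn (fun x ↦ exp (ω x)) (fun x ↦ exp (-ω x)) (A ∩ B) := fun x hx ↦ by
    rcases hPQ hx with hxP | hxQ
    · simp [ω, show l x = 0 from hlP ⟨hx, hxP⟩]
    · simp [ω, show l x = 1 from hlQ ⟨hx, hxQ⟩, Complex.exp_neg]
  obtain ⟨ψ, hψ, hψA, hψB⟩ := exists_continuous_eqOn_of_isClosed hA hB hAB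
    (by fun_prop) (by fun_prop) hglue
  have hψ₀ (x : X) : ψ x ≠ 0 := by
    rcases hAB.ge (Set.mem_univ x) with hx | hx
    · exact hψA hx ▸ Complex.exp_ne_zero _
    · exact hψB hx ▸ Complex.exp_ne_zero _
  obtain ⟨Θ, hΘ, hΘexp⟩ := hlog ψ (-ω) hψ hψ₀ hω.neg fun x hx ↦ (hψB hx).symm
  have := isPreconnected_iff_preconnectedSpace.1 hAconn
  have := isPreconnected_iff_preconnectedSpace.1 hBconn
  have hthroughA := sub_eq_sub_of_exp_eq_exp (X := A) (φ := fun x ↦ Θ x) (ψ := fun x ↦ ω x)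
    (by fun_prop) (by fun_prop) (fun x ↦ (hΘexp x).trans (hψA x.2)) ⟨p, hp.1⟩ ⟨q, hq.1⟩
  have hthroughB := sub_eq_sub_of_exp_eq_exp (X := B) (φ := fun x ↦ Θ x) (ψ := fun x ↦ -ω x)
    (by fun_prop) (by fun_prop) (fun x ↦ (hΘexp x).trans (hψB x.2)) ⟨p, hp.2⟩ ⟨q, hq.2⟩
  have hωp : ω p = 0 := by simp [ω, show l p = 0 from hlP ⟨hp, hpP⟩]
  have hωq : ω q = π * I := by simp [ω, show l q = 1 from hlQ ⟨hq, hqQ⟩]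
  rw [hωp, hωq] at hthroughA hthroughB
  exact Complex.two_pi_I_ne_zero (by linear_combination hthroughA - hthroughB)

theorem exists_log_of_exists_log_circle {ψ φ : Ann → ℂ} (hψ : Continuous ψ) (hψ₀ : ∀ a, ψ a ≠ 0)
    (hφ : Continuous φ) {y : ℝ} (hφψ : ∀ a : Ann, a.2 = y → exp (φ a) = ψ a) :
    ∃ Θ : Ann → ℂ, Continuous Θ ∧ ∀ a, exp (Θ a) = ψ a := by
  obtain ⟨θ, hθ, hθexp⟩ := exists_continuous_log (hψ.comp continuous_annCover) fun z ↦ hψ₀ _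
  have hperiodic (z : ℂ) (k : ℤ) : θ (z + k) = θ z := by
    have htranslate := sub_eq_sub_of_exp_eq_exp (φ := fun z ↦ θ (z + k)) (ψ := θ) (by fun_prop) hθ
      (fun z ↦ by simp only [hθexp, Function.comp_apply, annCover_add_intCast]) z (y * I)
    let line : ℝ → ℂ := fun t ↦ y * I + t
    have hline : Continuous line := by fun_prop
    have hcircle := sub_eq_sub_of_exp_eq_exp (φ := θ ∘ line) (ψ := φ ∘ annCover ∘ line)
      (hθ.comp hline) (hφ.comp (continuous_annCover.comp hline))
      (fun t ↦ (hθexp _).trans (hφψ _ (by simp [line, annCover, projA])).symm) k 0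
    simp only [Function.comp_apply, line, Complex.ofReal_intCast, annCover_add_intCast,
      Complex.ofReal_zero, add_zero, sub_self] at hcircle
    linear_combination htranslate + hcircle
  let p : C(ℂ, Ann) := ⟨annCover, continuous_annCover⟩
  have hp : IsQuotientMap p := isOpenQuotientMap_annCover.isQuotientMap
  have hfactor (z w : ℂ) (hzw : p z = p w) : θ z = θ w := by
    obtain ⟨k, rfl⟩ := annCover_eq_annCover_iff.1 hzw
    exact hperiodic w k
  let Θ : C(Ann, ℂ) := hp.lift ⟨θ, hθ⟩ hfactor
  have hΘ (z : ℂ) : Θ (annCover z) = θ z := DFunLike.congr_fun (hp.lift_comp ⟨θ, hθ⟩ hfactor) z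
  refine ⟨Θ, Θ.continuous, fun a ↦ ?_⟩
  obtain ⟨z, rfl⟩ := isOpenQuotientMap_annCover.surjective a
  rw [hΘ, hθexp, Function.comp_apply]

theorem isPreconnected_inter_of_circle_subset {A B : Set Ann} (hA : IsClosed A) (hB : IsClosed B)
    (hAconn : IsPreconnected A) (hBconn : IsPreconnected B) (hAB : A ∪ B = Set.univ) {y : ℝ}
    (hcircle : ∀ a : Ann, a.2 = y → a ∈ B) : IsPreconnected (A ∩ B) :=
  isPreconnected_inter_of_exists_log hA hB hAconn hBconn hAB fun _ _ hψ hψ₀ hφ hφψ ↦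
    exists_log_of_exists_log_circle hψ hψ₀ hφ fun a ha ↦ hφψ a (hcircle a ha)

/-! ### Components of complements -/

section Components

variable {X : Type*} [TopologicalSpace X]

theorem connectedComponentIn_union_eq_left {P Q : Set X} (hP : IsOpen P) (hQ : IsOpen Q)
    (hPconn : IsPreconnected P) (hPQ : Disjoint P Q) {x : X} (hx : x ∈ P) :
    connectedComponentIn (P ∪ Q) x = P := by
  refine Set.Subset.antisymm ?_ (hPconn.subset_connectedComponentIn hx Set.subset_union_left)
  exact isPreconnected_connectedComponentIn.subset_left_of_subset_union hP hQ hPQ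
    (connectedComponentIn_subset _ _) ⟨x, mem_connectedComponentIn (Or.inl hx), hx⟩

theorem disjoint_connectedComponentIn {U : Set X} {x y : X}
    (hxy : connectedComponentIn U x ≠ connectedComponentIn U y) :
    Disjoint (connectedComponentIn U x) (connectedComponentIn U y) :=
  Set.disjoint_left.2 fun _ hx hy ↦
    hxy ((connectedComponentIn_eq hx).trans (connectedComponentIn_eq hy).symm)

theorem image_connectedComponentIn_eq_self (F : X ≃ₜ X) {U : Set X} (hU : F '' U = U) {x y : X}
    (hy : y ∈ connectedComponentIn U x) (hFy : F y ∈ connectedComponentIn U x) :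
    F '' connectedComponentIn U x = connectedComponentIn U x := by
  have himage := F.image_connectedComponentIn (connectedComponentIn_subset _ _ hy)
  rwa [hU, ← connectedComponentIn_eq hy, ← connectedComponentIn_eq hFy] at himage

variable [LocallyConnectedSpace X] {K : Set X}

theorem closure_connectedComponentIn_compl_subset (hK : IsClosed K) (x : X) :
    closure (connectedComponentIn Kᶜ x) ⊆ connectedComponentIn Kᶜ x ∪ K := by
  intro w hw
  by_cases hwK : w ∈ K
  · exact Or.inr hwK
  obtain ⟨v, hvw, hvx⟩ := mem_closure_iff.1 hw _ hK.isOpen_compl.connectedComponentIn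
    (mem_connectedComponentIn hwK)
  rw [connectedComponentIn_eq hvx, ← connectedComponentIn_eq hvw]
  exact Or.inl (mem_connectedComponentIn hwK)

variable [PreconnectedSpace X]

theorem closure_connectedComponentIn_compl_inter_nonempty (hK : IsClosed K) (hne : K.Nonempty)
    {x : X} (hx : x ∉ K) : (closure (connectedComponentIn Kᶜ x) ∩ K).Nonempty := by
  rw [← Set.not_disjoint_iff_nonempty_inter]
  intro hdisj
  have hclosed : IsClosed (connectedComponentIn Kᶜ x) := isClosed_of_closure_subset
    (hdisj.subset_left_of_subset_union (closure_connectedComponentIn_compl_subset hK x))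
  have huniv : connectedComponentIn Kᶜ x = Set.univ :=
    IsClopen.eq_univ ⟨hclosed, hK.isOpen_compl.connectedComponentIn⟩
      ⟨x, mem_connectedComponentIn hx⟩
  obtain ⟨k, hk⟩ := hne
  exact connectedComponentIn_subset _ _ (huniv.ge (Set.mem_univ k)) hk

theorem isPreconnected_compl_connectedComponentIn_compl (hK : IsClosed K) (hconn : IsConnected K)
    (x : X) : IsPreconnected (connectedComponentIn Kᶜ x)ᶜ := by
  obtain ⟨k, hk⟩ := hconn.nonempty
  have hKsub : K ⊆ (connectedComponentIn Kᶜ x)ᶜ :=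
    Set.subset_compl_comm.1 (connectedComponentIn_subset _ _)
  refine isPreconnected_of_forall k fun z hz ↦ ?_
  by_cases hzK : z ∈ K
  · exact ⟨K, hKsub, hk, hzK, hconn.isPreconnected⟩
  obtain ⟨c, hcz, hcK⟩ := closure_connectedComponentIn_compl_inter_nonempty hK ⟨k, hk⟩ hzK
  have hdisj : connectedComponentIn Kᶜ z ⊆ (connectedComponentIn Kᶜ x)ᶜ := fun w hwz hwx ↦ hz <| by
    rw [connectedComponentIn_eq hwx, ← connectedComponentIn_eq hwz]
    exact mem_connectedComponentIn hzK
  refine ⟨closure (connectedComponentIn Kᶜ z) ∪ K, Set.union_subset ?_ hKsub, Or.inr hk,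
    Or.inl (subset_closure (mem_connectedComponentIn hzK)),
    isPreconnected_connectedComponentIn.closure.union c hcz hcK hconn.isPreconnected⟩
  exact (closure_connectedComponentIn_compl_subset hK z).trans (Set.union_subset hdisj hKsub)

end Components

/-! ### The two ends of the annulus -/

/-- The neighbourhood filter of an end of the real line: `+∞` for `true`, `-∞` for `false`. -/
def realEnd (b : Bool) : Filter ℝ := if b then atTop else atBot

instance (b : Bool) : (realEnd b).NeBot := by
  cases b
  · exact atBot_neBot
  · exact atTop_neBot

/-- The neighbourhood filter of an end of the annulus: the upper end for `true`, the lower end for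
`false`. -/
def annEnd (b : Bool) : Filter Ann := comap Prod.snd (realEnd b)

instance (b : Bool) : (annEnd b).NeBot :=
  NeBot.comap_of_surj inferInstance Prod.snd_surjective

theorem unbAbove_iff_frequently_annEnd {S : Set Ann} :
    UnbAbove S ↔ ∃ᶠ a in annEnd true, a ∈ S := by
  simp [UnbAbove, annEnd, realEnd, not_bddAbove_iff, frequently_comap, frequently_atTop', and_comm]

theorem unbBelow_iff_frequently_annEnd {S : Set Ann} :
    UnbBelow S ↔ ∃ᶠ a in annEnd false, a ∈ S := by
  simp [UnbBelow, annEnd, realEnd, not_bddBelow_iff, frequently_comap, frequently_atBot', and_comm]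

theorem not_boundedA_iff {S : Set Ann} : ¬ BoundedA S ↔ ∃ b, ∃ᶠ a in annEnd b, a ∈ S := by
  rw [Bool.exists_bool, ← unbAbove_iff_frequently_annEnd, ← unbBelow_iff_frequently_annEnd, or_comm]
  exact not_and_or

theorem exists_circle_subset_of_mem_annEnd {S : Set Ann} {b : Bool} (hS : S ∈ annEnd b) :
    ∃ y, ∀ a : Ann, a.2 = y → a ∈ S := by
  obtain ⟨T, hT, hTS⟩ := mem_comap.1 hS
  obtain ⟨y, hy⟩ := Filter.nonempty_of_mem hT
  exact ⟨y, fun a ha ↦ hTS (ha ▸ hy : a.2 ∈ T)⟩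

theorem exists_isPreconnected_subset_of_mem_annEnd {S : Set Ann} {b : Bool} (hS : S ∈ annEnd b) :
    ∃ T ∈ annEnd b, IsPreconnected T ∧ T ⊆ S := by
  obtain ⟨T, hT, hTconn, hTS⟩ : ∃ T ∈ realEnd b, IsPreconnected T ∧ Prod.snd ⁻¹' T ⊆ S := by
    obtain ⟨T, hT, hTS⟩ := mem_comap.1 hS
    cases b
    · obtain ⟨M, hM⟩ := mem_atBot_sets.1 hT
      exact ⟨Set.Iic M, Iic_mem_atBot M, isPreconnected_Iic,
        (Set.preimage_mono fun y hy ↦ hM y hy).trans hTS⟩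
    · obtain ⟨M, hM⟩ := mem_atTop_sets.1 hT
      exact ⟨Set.Ici M, Ici_mem_atTop M, isPreconnected_Ici,
        (Set.preimage_mono fun y hy ↦ hM y hy).trans hTS⟩
  refine ⟨Prod.snd ⁻¹' T, preimage_mem_comap hT, ?_, hTS⟩
  rw [← Set.univ_prod]
  exact isPreconnected_univ.prod hTconn

theorem compl_mem_annEnd {E : Set Ann} (hE : IsCompact E) (b : Bool) : Eᶜ ∈ annEnd b := by
  have hbdd : BoundedA E :=
    ⟨(hE.image continuous_snd).bddAbove, (hE.image continuous_snd).bddBelow⟩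
  by_contra hmem
  exact not_boundedA_iff.2 ⟨b, hmem⟩ hbdd

theorem exists_connectedComponentIn_mem_annEnd {U : Set Ann} {b : Bool} (hU : U ∈ annEnd b) :
    ∃ a, connectedComponentIn U a ∈ annEnd b := by
  obtain ⟨T, hT, hTconn, hTU⟩ := exists_isPreconnected_subset_of_mem_annEnd hU
  obtain ⟨a, ha⟩ := Filter.nonempty_of_mem hT
  exact ⟨a, mem_of_superset hT (hTconn.subset_connectedComponentIn ha hTU)⟩

/-- `P` and `Q` are the two components of the complement of `E`, where `P` is a neighbourhood of
the end `b` and `Q` of the opposite end. -/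
structure IsEndSeparation (b : Bool) (E P Q : Set Ann) : Prop where
  isOpen_left : IsOpen P
  isOpen_right : IsOpen Q
  isPreconnected_left : IsPreconnected P
  isPreconnected_right : IsPreconnected Q
  disjoint : Disjoint P Q
  union_eq : P ∪ Q = Eᶜ
  left_mem : P ∈ annEnd b
  right_mem : Q ∈ annEnd !b

theorem IsAnnularContinuum.exists_isEndSeparation {E : Set Ann} (hE : IsAnnularContinuum E) :
    ∃ P Q, IsEndSeparation true E P Q := by
  obtain ⟨hcompact, -, hunb, x, y, hx, hy, hxy, -⟩ := hE
  have hopen : IsOpen Eᶜ := hcompact.isClosed.isOpen_compl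
  choose e he using fun b ↦ exists_connectedComponentIn_mem_annEnd (compl_mem_annEnd hcompact b)
  have hcomp (z : Ann) (hz : z ∈ Eᶜ) :
      ∃ b, connectedComponentIn Eᶜ z = connectedComponentIn Eᶜ (e b) := by
    obtain ⟨b, hb⟩ := not_boundedA_iff.1 (hunb z hz)
    obtain ⟨v, hvz, hve⟩ := (hb.and_eventually (he b)).exists
    exact ⟨b, (connectedComponentIn_eq hvz).trans (connectedComponentIn_eq hve).symm⟩
  have hne : connectedComponentIn Eᶜ (e true) ≠ connectedComponentIn Eᶜ (e false) := fun heq ↦ by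
    obtain ⟨b, hb⟩ := hcomp x hx
    obtain ⟨c, hc⟩ := hcomp y hy
    cases b <;> cases c <;> simp_all
  refine ⟨connectedComponentIn Eᶜ (e true), connectedComponentIn Eᶜ (e false),
    hopen.connectedComponentIn, hopen.connectedComponentIn, isPreconnected_connectedComponentIn,
    isPreconnected_connectedComponentIn, disjoint_connectedComponentIn hne, ?_, he _, he _⟩
  refine (Set.union_subset (connectedComponentIn_subset _ _)
    (connectedComponentIn_subset _ _)).antisymm fun z hz ↦ ?_
  obtain ⟨b, hb⟩ := hcomp z hz
  have hzb : z ∈ connectedComponentIn Eᶜ (e b) := hb ▸ mem_connectedComponentIn hz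
  cases b
  · exact Or.inr hzb
  · exact Or.inl hzb

namespace IsEndSeparation

variable {b : Bool} {E P Q : Set Ann}

theorem symm (h : IsEndSeparation b E P Q) : IsEndSeparation (!b) E Q P where
  isOpen_left := h.isOpen_right
  isOpen_right := h.isOpen_left
  isPreconnected_left := h.isPreconnected_right
  isPreconnected_right := h.isPreconnected_left
  disjoint := h.disjoint.symm
  union_eq := by rw [Set.union_comm, h.union_eq]
  left_mem := h.right_mem
  right_mem := by simpa using h.left_mem

theorem left_subset (h : IsEndSeparation b E P Q) : P ⊆ Eᶜ := h.union_eq ▸ Set.subset_union_left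

theorem left_nonempty (h : IsEndSeparation b E P Q) : P.Nonempty :=
  Filter.nonempty_of_mem h.left_mem

theorem connectedComponentIn_eq_left (h : IsEndSeparation b E P Q) {x : Ann} (hx : x ∈ P) :
    connectedComponentIn Eᶜ x = P :=
  h.union_eq ▸
    connectedComponentIn_union_eq_left h.isOpen_left h.isOpen_right h.isPreconnected_left
      h.disjoint hx

theorem not_boundedA_left (h : IsEndSeparation b E P Q) : ¬ BoundedA P :=
  not_boundedA_iff.2 ⟨b, Filter.Eventually.frequently h.left_mem⟩

theorem isPreconnected_compl_left (h : IsEndSeparation b E P Q) (hE : IsClosed E)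
    (hconn : IsConnected E) : IsPreconnected Pᶜ := by
  obtain ⟨x, hx⟩ := h.left_nonempty
  rw [← h.connectedComponentIn_eq_left hx]
  exact isPreconnected_compl_connectedComponentIn_compl hE hconn x

theorem isAnnularContinuum (h : IsEndSeparation b E P Q) (hE : IsCompact E)
    (hconn : IsConnected E) : IsAnnularContinuum E := by
  obtain ⟨x, hx⟩ := h.left_nonempty
  obtain ⟨y, hy⟩ := h.symm.left_nonempty
  refine ⟨hE, hconn, ?_, x, y, h.left_subset hx, h.symm.left_subset hy, ?_, ?_⟩
  · rw [← h.union_eq]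
    rintro z (hz | hz)
    · rw [h.union_eq, h.connectedComponentIn_eq_left hz]
      exact h.not_boundedA_left
    · rw [h.union_eq, h.symm.connectedComponentIn_eq_left hz]
      exact h.symm.not_boundedA_left
  · rw [h.connectedComponentIn_eq_left hx, h.symm.connectedComponentIn_eq_left hy]
    exact h.disjoint.ne h.left_nonempty.ne_empty
  · intro z hz
    rw [h.connectedComponentIn_eq_left hx, h.symm.connectedComponentIn_eq_left hy]
    rw [← h.union_eq] at hz
    exact hz.imp h.connectedComponentIn_eq_left h.symm.connectedComponentIn_eq_left

theorem isConnected_compl_union (h : IsEndSeparation b E P Q) (hP : IsPreconnected Pᶜ)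
    (hQ : IsPreconnected Qᶜ) : IsConnected (P ∪ Q)ᶜ := by
  constructor
  · rw [Set.nonempty_compl]
    intro huniv
    obtain ⟨z, -, hzP, hzQ⟩ := isPreconnected_univ P Q h.isOpen_left h.isOpen_right huniv.ge
      (by simpa using h.left_nonempty) (by simpa using h.symm.left_nonempty)
    exact Set.disjoint_left.1 h.disjoint hzP hzQ
  · obtain ⟨y, hy⟩ := exists_circle_subset_of_mem_annEnd h.left_mem
    rw [Set.compl_union]
    refine isPreconnected_inter_of_circle_subset h.isOpen_left.isClosed_compl
      h.isOpen_right.isClosed_compl hP hQ ?_ fun a ha ↦ Set.disjoint_left.1 h.disjoint (hy a ha)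
    rw [← Set.compl_inter, h.disjoint.inter_eq, Set.compl_empty]

theorem enlarge_right (h : IsEndSeparation b E P Q) {L : Set Ann} (hL : IsOpen L)
    (hLconn : IsPreconnected L) (hPL : Disjoint P L) (hQL : Q ⊆ L) :
    IsEndSeparation b (P ∪ L)ᶜ P L where
  isOpen_left := h.isOpen_left
  isOpen_right := hL
  isPreconnected_left := h.isPreconnected_left
  isPreconnected_right := hLconn
  disjoint := hPL
  union_eq := (compl_compl _).symm
  left_mem := h.left_mem
  right_mem := mem_of_superset h.right_mem hQL

end IsEndSeparation

/-! ### Circloids -/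

namespace IsCircloidA

variable {b : Bool} {C C₁ C₂ P Q P₁ Q₁ P₂ Q₂ : Set Ann}

-- Minimality: `Q` cannot be enlarged to a larger open connected set missing `P` whose complement
-- is connected, since the complement of the union would be a smaller annular continuum.
theorem eq_right_of_superset (hC : IsCircloidA C) (h : IsEndSeparation b C P Q) {L : Set Ann}
    (hL : IsOpen L) (hLconn : IsPreconnected L) (hLcompl : IsPreconnected Lᶜ)
    (hPL : Disjoint P L) (hQL : Q ⊆ L) : L = Q := by
  have hsep := h.enlarge_right hL hLconn hPL hQL
  have hsub : (P ∪ L)ᶜ ⊆ C := by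
    rw [Set.compl_subset_comm, ← h.union_eq]
    exact Set.union_subset_union_right P hQL
  have hclosed : IsClosed (P ∪ L)ᶜ := (h.isOpen_left.union hL).isClosed_compl
  have hconn := hsep.isConnected_compl_union
    (h.isPreconnected_compl_left hC.1.1.isClosed hC.1.2.1) hLcompl
  have heq : (P ∪ L)ᶜ = C := hC.2 _ hsub
    (hsep.isAnnularContinuum (hC.1.1.of_isClosed_subset hclosed hsub) hconn)
  refine (hPL.symm.subset_right_of_subset_union ?_).antisymm hQL
  rw [h.union_eq, ← heq, compl_compl]
  exact Set.subset_union_right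

theorem subset_right_of_disjoint_closure (hC : IsCircloidA C) (h : IsEndSeparation b C P Q)
    {S : Set Ann} (hS : IsPreconnected S) (hSP : Disjoint S (closure P))
    (hSQ : (S ∩ Q).Nonempty) : S ⊆ Q := by
  obtain ⟨q, hqS, hqQ⟩ := hSQ
  have hQcompl : Q ⊆ (closure P)ᶜ :=
    (h.disjoint.closure_left h.isOpen_right).subset_compl_left
  have heq := hC.eq_right_of_superset h (L := connectedComponentIn (closure P)ᶜ q)
    isClosed_closure.isOpen_compl.connectedComponentIn isPreconnected_connectedComponentIn
    (isPreconnected_compl_connectedComponentIn_compl isClosed_closure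
      ⟨h.left_nonempty.closure, h.isPreconnected_left.closure⟩ q)
    (Set.disjoint_left.2 fun z hzP hzL ↦ connectedComponentIn_subset _ _ hzL (subset_closure hzP))
    (h.isPreconnected_right.subset_connectedComponentIn hqQ hQcompl)
  exact heq ▸ hS.subset_connectedComponentIn hqS hSP.subset_compl_right

theorem left_subset_left (hC₂ : IsCircloidA C₂) (h₁ : IsEndSeparation b C₁ P₁ Q₁)
    (h₂ : IsEndSeparation b C₂ P₂ Q₂) (hdisj : Disjoint P₁ Q₂) : P₁ ⊆ P₂ :=
  hC₂.subset_right_of_disjoint_closure h₂.symm h₁.isPreconnected_left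
    (hdisj.closure_right h₁.isOpen_left)
    (Filter.nonempty_of_mem (inter_mem h₁.left_mem h₂.left_mem))

theorem eq_of_disjoint (hC₁ : IsCircloidA C₁) (hC₂ : IsCircloidA C₂)
    (h₁ : IsEndSeparation b C₁ P₁ Q₁) (h₂ : IsEndSeparation b C₂ P₂ Q₂)
    (hdisj : Disjoint P₁ Q₂) (hdisj' : Disjoint P₂ Q₁) : C₁ = C₂ := by
  have hP : P₁ = P₂ :=
    (hC₂.left_subset_left h₁ h₂ hdisj).antisymm (hC₁.left_subset_left h₂ h₁ hdisj')
  have hQ : Q₁ = Q₂ := (hC₂.left_subset_left h₁.symm h₂.symm hdisj'.symm).antisymm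
    (hC₁.left_subset_left h₂.symm h₁.symm hdisj.symm)
  rw [← compl_inj_iff, ← h₁.union_eq, ← h₂.union_eq, hP, hQ]

end IsCircloidA

/-! ### Non-wandering dynamics -/

theorem coe_homeomorph_pow {X : Type*} [TopologicalSpace X] (f : X ≃ₜ X) (n : ℕ) :
    ⇑(f ^ n) = f^[n] :=
  hom_coe_pow _ rfl (fun _ _ ↦ rfl) f n

namespace NonWandering

variable {X : Type*} [TopologicalSpace X] {f : X → X}

theorem exists_finset_iterate_mem (hnw : NonWandering f) (hf : Continuous f) (r : ℕ) {U : Set X}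
    (hU : IsOpen U) (hne : U.Nonempty) :
    ∃ A : Finset ℕ, A.card = r + 1 ∧ ∃ x, ∀ a ∈ A, f^[a] x ∈ U := by
  induction r generalizing U with
  | zero =>
    obtain ⟨x, hx⟩ := hne
    exact ⟨{0}, rfl, x, by simpa using hx⟩
  | succ r ih =>
    obtain ⟨n, hn, _, ⟨u, hu, rfl⟩, hnu⟩ := hnw U hU hne
    obtain ⟨A, hA, x, hx⟩ := ih (hU.inter (hU.preimage (hf.iterate n))) ⟨u, hu, hnu⟩
    have hAne : A.Nonempty := Finset.card_pos.1 (by omega)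
    have hnew : n + A.max' hAne ∉ A := fun hmem ↦ by
      have := A.le_max' _ hmem
      omega
    refine ⟨insert (n + A.max' hAne) A, by rw [Finset.card_insert_of_notMem hnew, hA], x, ?_⟩
    simp only [Finset.forall_mem_insert, Function.iterate_add_apply]
    exact ⟨(hx _ (A.max'_mem hAne)).2, fun a ha ↦ (hx a ha).1⟩

-- Pigeonhole: among `m + 1` return times two are congruent modulo `m`.
theorem iterate (hnw : NonWandering f) (hf : Continuous f) {m : ℕ} (hm : 0 < m) :
    NonWandering f^[m] := by
  intro U hU hne
  obtain ⟨A, hA, x, hx⟩ := hnw.exists_finset_iterate_mem hf m hU hne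
  obtain ⟨a, ha, b, hb, hab, hmod⟩ : ∃ a ∈ A, ∃ b ∈ A, a < b ∧ a ≡ b [MOD m] := by
    obtain ⟨a, ha, b, hb, hne, hmod⟩ := Finset.exists_ne_map_eq_of_card_lt_of_maps_to
      (s := A) (t := Finset.range m) (f := (· % m)) (by simp [hA])
      fun a _ ↦ by simpa using Nat.mod_lt a hm
    rcases hne.lt_or_gt with hlt | hlt
    · exact ⟨a, ha, b, hb, hlt, hmod⟩
    · exact ⟨b, hb, a, ha, hlt, hmod.symm⟩
  obtain ⟨j, hj⟩ := (Nat.modEq_iff_dvd' hab.le).1 hmod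
  have hj₀ : j ≠ 0 := by
    rintro rfl
    omega
  refine ⟨j, Nat.one_le_iff_ne_zero.2 hj₀, f^[b] x, ⟨f^[a] x, hx a ha, ?_⟩, hx b hb⟩
  rw [← Function.iterate_mul, ← hj, ← Function.iterate_add_apply, Nat.sub_add_cancel hab.le]

end NonWandering

/-- Every power of `f` that sends some point of `W` back into `W` maps `W` onto itself. -/
def IsReturnInvariant {X : Type*} [TopologicalSpace X] (f : X ≃ₜ X) (W : Set X) : Prop :=
  ∀ n : ℕ, ∀ x ∈ W, (f ^ n) x ∈ W → (f ^ n) '' W = W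

namespace IsReturnInvariant

variable {X : Type*} [TopologicalSpace X] {f : X ≃ₜ X}

theorem inter {V W : Set X} (hV : IsReturnInvariant f V) (hW : IsReturnInvariant f W) :
    IsReturnInvariant f (V ∩ W) := fun n x hx hfx ↦ by
  rw [Set.image_inter (f ^ n).injective, hV n x hx.1 hfx.1, hW n x hx.2 hfx.2]

theorem connectedComponentIn {U : Set X} (hU : f '' U = U) (x : X) :
    IsReturnInvariant f (connectedComponentIn U x) := fun n _ hy hfy ↦
  image_connectedComponentIn_eq_self (f ^ n)
    (by rw [coe_homeomorph_pow, Set.image_iterate_eq]; exact Function.iterate_fixed hU n) hy hfy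

end IsReturnInvariant

theorem IsEndSeparation.isReturnInvariant_left {b : Bool} {E P Q : Set Ann}
    (h : IsEndSeparation b E P Q) {f : Ann ≃ₜ Ann} (hE : f '' E = E) : IsReturnInvariant f P := by
  obtain ⟨x, hx⟩ := h.left_nonempty
  rw [← h.connectedComponentIn_eq_left hx]
  exact .connectedComponentIn (by rw [Set.image_compl_eq f.bijective, hE]) x

theorem exists_lift_mapsTo_connectedComponentIn {f : Ann ≃ₜ Ann} (hnw : NonWandering f)
    {W : Set Ann} (hW : IsOpen W) (hWinv : IsReturnInvariant f W) {x : ℂ} (hx : annCover x ∈ W) :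
    ∃ q : ℕ, 0 < q ∧ ∃ H : ℂ ≃ₜ ℂ, (∀ z, annCover (H z) = f^[q] (annCover z)) ∧
      Set.MapsTo H (connectedComponentIn (annCover ⁻¹' W) x)
        (connectedComponentIn (annCover ⁻¹' W) x) := by
  set D := connectedComponentIn (annCover ⁻¹' W) x
  have hDopen : IsOpen D := (hW.preimage continuous_annCover).connectedComponentIn
  have hDW : D ⊆ annCover ⁻¹' W := connectedComponentIn_subset _ _
  obtain ⟨q, hq, _, ⟨_, ⟨d, hd, rfl⟩, rfl⟩, ⟨d', hd', hdd'⟩⟩ := hnw (annCover '' D)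
    (isOpenQuotientMap_annCover.isOpenMap _ hDopen) ⟨_, x, mem_connectedComponentIn hx, rfl⟩
  rw [← coe_homeomorph_pow] at hdd'
  obtain ⟨F, hF⟩ := exists_homeomorph_lift (f ^ q)
  obtain ⟨k, hk⟩ := annCover_eq_annCover_iff.1 ((hF d).trans hdd'.symm)
  let H : ℂ ≃ₜ ℂ := F.trans (Homeomorph.subRight (k : ℂ))
  have hH (z : ℂ) : annCover (H z) = (f ^ q) (annCover z) := by
    rw [← hF, ← annCover_add_intCast (H z) k]
    simp [H]
  have hHd : H d = d' := by simp [H, hk]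
  have hfW : (f ^ q) '' W = W := hWinv q _ (hDW hd) (hdd' ▸ hDW hd')
  have hpreimage : H ⁻¹' (annCover ⁻¹' W) = annCover ⁻¹' W := by
    ext z
    simp only [Set.mem_preimage, hH]
    rw [← (f ^ q).injective.mem_set_image (a := annCover z), hfW]
  have himage : H '' (annCover ⁻¹' W) = annCover ⁻¹' W := by
    conv_lhs => rw [← hpreimage, Set.image_preimage_eq _ H.surjective]
  have hHD : H '' D = D := image_connectedComponentIn_eq_self H himage hd (hHd ▸ hd')
  refine ⟨q, hq, H, fun z ↦ by rw [hH, coe_homeomorph_pow], ?_⟩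
  exact Set.mapsTo_iff_image_subset.2 hHD.subset

-- A recurrent orbit of `g` lifts, inside `D`, to an orbit of `h` that returns to a small free disc:
-- it cannot return to a translate of the disc because `D` meets each orbit of translations once.
theorem eq_empty_of_lift_mapsTo {g : Ann → Ann} (hnw : NonWandering g) {h : ℂ ≃ₜ ℂ}
    (hh : IsBrouwer h) (hlift : Function.Semiconj annCover h g) {D : Set ℂ} (hD : IsOpen D)
    (hmaps : Set.MapsTo h D D) (htranslate : ∀ d ∈ D, ∀ k : ℤ, d + k ∈ D → k = 0) : D = ∅ := by
  refine Set.eq_empty_of_forall_notMem fun x hx ↦ ?_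
  obtain ⟨r, hr, -, -, -, hfree⟩ := exists_isFree_ball h.continuous hh.apply_ne x
  obtain ⟨ε, hε, hεD⟩ := Metric.isOpen_iff.1 hD x hx
  let N := Metric.ball x (min r ε)
  have hND : N ⊆ D := (Metric.ball_subset_ball (min_le_right r ε)).trans hεD
  have hNfree : IsFree h N := hfree.mono (Metric.ball_subset_ball (min_le_left r ε))
  obtain ⟨n, hn, _, ⟨_, ⟨b, hb, rfl⟩, rfl⟩, b', hb', hbb'⟩ := hnw (annCover '' N)
    (isOpenQuotientMap_annCover.isOpenMap _ Metric.isOpen_ball)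
    ⟨_, x, Metric.mem_ball_self (lt_min hr hε), rfl⟩
  rw [← (hlift.iterate_right n) b] at hbb'
  obtain ⟨k, hk⟩ := annCover_eq_annCover_iff.1 hbb'.symm
  have hk₀ : k = 0 := htranslate b' (hND hb') k (hk ▸ hmaps.iterate n (hND hb))
  rw [hk₀, Int.cast_zero, add_zero] at hk
  exact hh.iterate_notMem Metric.isOpen_ball (convex_ball x _).isPreconnected hNfree hb hn
    (hk ▸ hb')

theorem eq_empty_of_isReturnInvariant {f : Ann ≃ₜ Ann} (hnw : NonWandering f)
    (hnp : ¬ HasPeriodicPoint f) {W : Set Ann} (hW : IsOpen W) (hWinv : IsReturnInvariant f W)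
    (hcompl : IsPreconnected Wᶜ) (habove : UnbAbove Wᶜ) (hbelow : UnbBelow Wᶜ) : W = ∅ := by
  refine Set.eq_empty_of_forall_notMem fun w hw ↦ ?_
  obtain ⟨x, rfl⟩ := isOpenQuotientMap_annCover.surjective w
  obtain ⟨q, hq, H, hH, hHD⟩ := exists_lift_mapsTo_connectedComponentIn hnw hW hWinv hw
  set D := connectedComponentIn (annCover ⁻¹' W) x
  have hDopen : IsOpen D := (hW.preimage continuous_annCover).connectedComponentIn
  have hDW : Disjoint (annCover '' D) Wᶜ := Set.disjoint_compl_right_iff_subset.2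
    (Set.image_subset_iff.2 (connectedComponentIn_subset _ _))
  have hlift : Function.Semiconj annCover (H.trans H) f^[q + q] := fun z ↦ by
    rw [Homeomorph.trans_apply, hH, hH, Function.iterate_add_apply]
  have hBrouwer : IsBrouwer (H.trans H) := ⟨orientationPreserving_trans_self H, fun z hz ↦
    hnp ⟨annCover z, q + q, by omega, (hlift z).symm.trans (congrArg annCover hz)⟩⟩
  have hempty := eq_empty_of_lift_mapsTo (hnw.iterate f.continuous (by omega)) hBrouwer hlift
    hDopen (hHD.comp hHD) fun d hd k hdk ↦ eq_zero_of_disjoint_of_unbounded hDopen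
      isPreconnected_connectedComponentIn hcompl habove hbelow hDW hd hdk
  exact hempty.le (mem_connectedComponentIn hw)

theorem IsEndSeparation.disjoint_of_nonempty_inter {f : Ann ≃ₜ Ann} (hnw : NonWandering f)
    (hnp : ¬ HasPeriodicPoint f) {C₁ C₂ P₁ Q₁ P₂ Q₂ : Set Ann} (hC₁ : IsAnnularContinuum C₁)
    (hC₂ : IsAnnularContinuum C₂) (hC₁inv : f '' C₁ = C₁) (hC₂inv : f '' C₂ = C₂)
    (h₁ : IsEndSeparation true C₁ P₁ Q₁) (h₂ : IsEndSeparation true C₂ P₂ Q₂)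
    (hne : (C₁ ∩ C₂).Nonempty) : Disjoint P₁ Q₂ := by
  obtain ⟨c, hc₁, hc₂⟩ := hne
  have hcompl : IsPreconnected (P₁ ∩ Q₂)ᶜ := by
    rw [Set.compl_inter]
    exact (h₁.isPreconnected_compl_left hC₁.1.isClosed hC₁.2.1).union c
      (fun hc ↦ h₁.left_subset hc hc₁) (fun hc ↦ h₂.symm.left_subset hc hc₂)
      (h₂.symm.isPreconnected_compl_left hC₂.1.isClosed hC₂.2.1)
  have habove : UnbAbove (P₁ ∩ Q₂)ᶜ := unbAbove_iff_frequently_annEnd.2 <|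
    Filter.Eventually.frequently <| mem_of_superset h₂.left_mem fun _ hP₂ hW ↦
      Set.disjoint_left.1 h₂.disjoint hP₂ hW.2
  have hbelow : UnbBelow (P₁ ∩ Q₂)ᶜ := unbBelow_iff_frequently_annEnd.2 <|
    Filter.Eventually.frequently <| mem_of_superset h₁.right_mem fun _ hQ₁ hW ↦
      Set.disjoint_left.1 h₁.disjoint hW.1 hQ₁
  exact Set.disjoint_iff_inter_eq_empty.2 <| eq_empty_of_isReturnInvariant hnw hnp
    (h₁.isOpen_left.inter h₂.isOpen_right)
    ((h₁.isReturnInvariant_left hC₁inv).inter (h₂.symm.isReturnInvariant_left hC₂inv))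
    hcompl habove hbelow

theorem statement15_general (f : Ann ≃ₜ Ann) (hnw : NonWandering f) (hnp : ¬ HasPeriodicPoint f)
    (C₁ C₂ : Set Ann) (hC₁ : IsCircloidA C₁) (hC₂ : IsCircloidA C₂)
    (hC₁inv : f '' C₁ = C₁) (hC₂inv : f '' C₂ = C₂) : C₁ = C₂ ∨ C₁ ∩ C₂ = ∅ := by
  refine or_iff_not_imp_right.2 fun hint ↦ ?_
  have hne : (C₁ ∩ C₂).Nonempty := Set.nonempty_iff_ne_empty.2 hint
  obtain ⟨P₁, Q₁, h₁⟩ := hC₁.1.exists_isEndSeparation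
  obtain ⟨P₂, Q₂, h₂⟩ := hC₂.1.exists_isEndSeparation
  exact hC₁.eq_of_disjoint hC₂ h₁ h₂
    (h₁.disjoint_of_nonempty_inter hnw hnp hC₁.1 hC₂.1 hC₁inv hC₂inv h₂ hne)
    (h₂.disjoint_of_nonempty_inter hnw hnp hC₂.1 hC₁.1 hC₂inv hC₁inv h₁
      (Set.inter_comm C₁ C₂ ▸ hne))

/-- **Proposition 3.7.**  Two invariant circloids of a non-wandering annular
homeomorphism homotopic to the identity and without periodic points are equal or
disjoint. -/
theorem statement15 (f : Ann ≃ₜ Ann) (G : (ℝ × ℝ) ≃ₜ (ℝ × ℝ)) (hG : IsLiftA f G)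
    (hnw : NonWandering (⇑f)) (hnp : ¬ HasPeriodicPoint (⇑f))
    (C₁ C₂ : Set Ann) (hC₁ : IsCircloidA C₁) (hC₂ : IsCircloidA C₂)
    (hC₁inv : f '' C₁ = C₁) (hC₂inv : f '' C₂ = C₂) :
    C₁ = C₂ ∨ C₁ ∩ C₂ = ∅ := by
  exact statement15_general f hnw hnp C₁ C₂ hC₁ hC₂ hC₁inv hC₂inv
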